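/- arXiv:1505.01520 — 8 statements merged into one kernel-verified Lean document; each statement's English description precedes it below -/
import Mathlib

section
/- With the notation of the context, the following identity holds: ∫_a^b P(x,t)·f″(t) dt = τ(x;α,β). -/
open MeasureTheory intervalIntegral

/-- Integral mean of `f` over `[c,d]`. -/
noncomputable def intMean (f : ℝ → ℝ) (c d : ℝ) : ℝ :=
  (1 / (d - c)) * ∫ t in c..d, f t

/-- The functional τ(x; α, β) of the paper (with parameter h). -/
noncomputable def tau (a b h α β : ℝ) (f f' : ℝ → ℝ) (x : ℝ) : ℝ :=
  (1 / (2 * (α + β))) * ((α / (x - a)) * (x - a - h * (b - a) / 2) ^ 2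
      - (β / (b - x)) * (x - b + h * (b - a) / 2) ^ 2) * f' x
  - (1 / (α + β)) * ((α / (x - a)) * (x - a - h * (b - a) / 2)
      - (β / (b - x)) * (x - b + h * (b - a) / 2)) * f x
  - (h * (b - a) / (2 * (α + β))) * ((α / (x - a)) * f a + (β / (b - x)) * f b)
  + (h ^ 2 * (b - a) ^ 2 / (8 * (α + β))) * ((β / (b - x)) * f' b - (α / (x - a)) * f' a)
  + (1 / (α + β)) * (α * intMean f a x + β * intMean f x b)

/-!
On each of `[a, x]` and `[x, b]` the kernel is a multiple of `(t - m) ^ 2`, where the node `m` is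
`a + h * (b - a) / 2` on the left and `b - h * (b - a) / 2` on the right. Two integrations by parts
move both derivatives from `f` to this square, leaving `∫ f` and boundary terms. Those at `a` and
`b` have `t - m = ∓ h * (b - a) / 2`; those at `x`, where the kernel may jump, need not cancel and
give the `f x` and `f' x` terms of `tau`.
-/

open Set

theorem absolutelyContinuousOnInterval_congr {X : Type*} [PseudoMetricSpace X] {F G : ℝ → X}
    {a b : ℝ} (hF : AbsolutelyContinuousOnInterval F a b) (hGF : EqOn G F (uIcc a b)) :
    AbsolutelyContinuousOnInterval G a b :=
  hF.congr' <| Filter.eventually_inf_principal.2 <| .of_forall fun I hI ↦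
    Finset.sum_congr rfl fun i hi ↦ by rw [hGF (hI.1 i hi).1, hGF (hI.1 i hi).2]

/-- `F` is a primitive of the integrable function `f` on the interval with endpoints `a` and `b`. By
Lebesgue's fundamental theorem of calculus, for real-valued `F` this says that `F` is absolutely
continuous with `F' = f` almost everywhere. The identity is required at every point
of the closed interval, but `F` need not be differentiable at any particular point. -/
structure IsPrimitiveOn {E : Type*} [NormedAddCommGroup E] [NormedSpace ℝ E]
    (F f : ℝ → E) (a b : ℝ) : Prop where
  intervalIntegrable : IntervalIntegrable f volume a b
  eq_add_integral : ∀ t ∈ uIcc a b, F t = F a + ∫ s in a..t, f s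

namespace IsPrimitiveOn

section NormedSpace

variable {E : Type*} [NormedAddCommGroup E] [NormedSpace ℝ E] {F f : ℝ → E} {a b c d : ℝ}

theorem of_hasDerivAt [CompleteSpace E] (hF : ∀ t ∈ uIcc a b, HasDerivAt F (f t) t)
    (hf : IntervalIntegrable f volume a b) : IsPrimitiveOn F f a b where
  intervalIntegrable := hf
  eq_add_integral t ht := by
    have hsub : uIcc a t ⊆ uIcc a b := uIcc_subset_uIcc_left ht
    rw [integral_eq_sub_of_hasDerivAt (fun s hs ↦ hF s (hsub hs)) (hf.mono_set hsub),
      add_sub_cancel]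

theorem continuousOn (hF : IsPrimitiveOn F f a b) : ContinuousOn F (uIcc a b) :=
  (continuousOn_const.add
    (continuousOn_primitive_interval' hF.intervalIntegrable left_mem_uIcc)).congr
    hF.eq_add_integral

theorem mono (hF : IsPrimitiveOn F f a b) (hcd : uIcc c d ⊆ uIcc a b) :
    IsPrimitiveOn F f c d where
  intervalIntegrable := hF.intervalIntegrable.mono_set hcd
  eq_add_integral t ht := by
    have hc : c ∈ uIcc a b := hcd left_mem_uIcc
    have hac := hF.intervalIntegrable.mono_set (uIcc_subset_uIcc_left hc)
    have hct := hF.intervalIntegrable.mono_set (uIcc_subset_uIcc hc (hcd ht))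
    rw [hF.eq_add_integral t (hcd ht), hF.eq_add_integral c hc, add_assoc,
      integral_add_adjacent_intervals hac hct]

theorem ae_hasDerivAt [CompleteSpace E] (hF : IsPrimitiveOn F f a b) :
    ∀ᵐ t, t ∈ uIcc a b → HasDerivAt F (f t) t := by
  filter_upwards [hF.intervalIntegrable.ae_hasDerivAt_integral, volume.ae_ne a, volume.ae_ne b]
    with t ht hta htb htab
  have hmem : uIcc a b ∈ nhds t := Icc_mem_nhds (by grind [uIcc]) (by grind [uIcc])
  exact ((ht htab a left_mem_uIcc).const_add (F a)).congr_of_eventuallyEq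
    (Filter.eventually_of_mem hmem hF.eq_add_integral)

end NormedSpace

section Real

variable {u u' u'' v v' v'' : ℝ → ℝ} {a b : ℝ}

theorem absolutelyContinuousOnInterval (hu : IsPrimitiveOn u u' a b) :
    AbsolutelyContinuousOnInterval u a b :=
  absolutelyContinuousOnInterval_congr
    (contDiffOn_const.absolutelyContinuousOnInterval.add
      (hu.intervalIntegrable.absolutelyContinuousOnInterval_intervalIntegral left_mem_uIcc))
    hu.eq_add_integral

theorem integral_mul_eq_sub_integral_mul (hu : IsPrimitiveOn u u' a b)
    (hv : IsPrimitiveOn v v' a b) :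
    ∫ t in a..b, u t * v' t = u b * v b - u a * v a - ∫ t in a..b, u' t * v t := by
  have hderiv_u : ∫ t in a..b, deriv u t * v t = ∫ t in a..b, u' t * v t :=
    integral_congr_ae <| hu.ae_hasDerivAt.mono fun t ht htab ↦ by
      rw [(ht (uIoc_subset_uIcc htab)).deriv]
  have hderiv_v : ∫ t in a..b, u t * deriv v t = ∫ t in a..b, u t * v' t :=
    integral_congr_ae <| hv.ae_hasDerivAt.mono fun t ht htab ↦ by
      rw [(ht (uIoc_subset_uIcc htab)).deriv]
  rw [← hderiv_u, ← hderiv_v]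
  exact hu.absolutelyContinuousOnInterval.integral_mul_deriv_eq_deriv_mul
    hv.absolutelyContinuousOnInterval

theorem integral_mul_eq_add_integral_mul (hu : IsPrimitiveOn u u' a b)
    (hu' : IsPrimitiveOn u' u'' a b) (hv : IsPrimitiveOn v v' a b)
    (hv' : IsPrimitiveOn v' v'' a b) :
    ∫ t in a..b, u t * v'' t =
      u b * v' b - u a * v' a - (u' b * v b - u' a * v a) + ∫ t in a..b, u'' t * v t := by
  rw [hu.integral_mul_eq_sub_integral_mul hv', hu'.integral_mul_eq_sub_integral_mul hv]
  ring

theorem integral_sub_sq_mul_eq (hv : IsPrimitiveOn v v' a b)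
    (hv' : IsPrimitiveOn v' v'' a b) (m : ℝ) :
    ∫ t in a..b, (t - m) ^ 2 * v'' t =
      (b - m) ^ 2 * v' b - (a - m) ^ 2 * v' a - 2 * ((b - m) * v b - (a - m) * v a)
        + 2 * ∫ t in a..b, v t := by
  have hsq : IsPrimitiveOn (fun t ↦ (t - m) ^ 2) (fun t ↦ 2 * (t - m)) a b :=
    .of_hasDerivAt (fun t _ ↦ by simpa using ((hasDerivAt_id t).sub_const m).fun_pow 2)
      (Continuous.intervalIntegrable (by fun_prop) a b)
  have hlin : IsPrimitiveOn (fun t ↦ 2 * (t - m)) (fun _ ↦ 2) a b :=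
    .of_hasDerivAt (fun t _ ↦ by simpa using ((hasDerivAt_id t).sub_const m).const_mul 2)
      intervalIntegrable_const
  rw [hsq.integral_mul_eq_add_integral_mul hlin hv hv', intervalIntegral.integral_const_mul]
  ring

end Real

end IsPrimitiveOn

theorem intervalIntegral_ite_le {E : Type*} [NormedAddCommGroup E] [NormedSpace ℝ E]
    {μ : Measure ℝ} {p q : ℝ → E} {a x b : ℝ} (hax : a ≤ x) (hxb : x ≤ b)
    (hp : IntervalIntegrable p μ a x) (hq : IntervalIntegrable q μ x b) :
    ∫ t in a..b, (if t ≤ x then p t else q t) ∂μ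
      = (∫ t in a..x, p t ∂μ) + ∫ t in x..b, q t ∂μ := by
  have hleft : EqOn p (fun t ↦ if t ≤ x then p t else q t) (uIoc a x) := fun t ht ↦
    (if_pos (uIoc_of_le hax ▸ ht).2).symm
  have hright : EqOn q (fun t ↦ if t ≤ x then p t else q t) (uIoc x b) := fun t ht ↦
    (if_neg (uIoc_of_le hxb ▸ ht).1.not_ge).symm
  rw [← integral_add_adjacent_intervals (hp.congr hleft) (hq.congr hright),
    integral_congr_ae (.of_forall hleft), integral_congr_ae (.of_forall hright)]

theorem integral_ite_sub_sq_mul {g : ℝ → ℝ} {a x b : ℝ} (hax : a ≤ x) (hxb : x ≤ b)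
    (hg : IntervalIntegrable g volume a b) (p q m n : ℝ) :
    ∫ t in a..b, (if t ≤ x then p * (t - m) ^ 2 else q * (t - n) ^ 2) * g t =
      p * (∫ t in a..x, (t - m) ^ 2 * g t) + q * ∫ t in x..b, (t - n) ^ 2 * g t := by
  have hx : x ∈ uIcc a b := mem_uIcc_of_le hax hxb
  have hleft := hg.mono_set (uIcc_subset_uIcc_left hx)
  have hright := hg.mono_set (uIcc_subset_uIcc_right hx)
  simp only [ite_mul, mul_assoc]
  rw [intervalIntegral_ite_le hax hxb
      ((hleft.continuousOn_mul (by fun_prop)).const_mul p)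
      ((hright.continuousOn_mul (by fun_prop)).const_mul q),
    intervalIntegral.integral_const_mul, intervalIntegral.integral_const_mul]

theorem stmt_0_general {a b α β x : ℝ} {f f' f'' : ℝ → ℝ} (hαβ : α + β ≠ 0)
    (hax : a < x) (hxb : x < b)
    (hf : IsPrimitiveOn f f' a b) (hf' : IsPrimitiveOn f' f'' a b) (h : ℝ) :
    (∫ t in a..b,
        (if t ≤ x then (α / (2 * (α + β) * (x - a))) * (t - a - h * (b - a) / 2) ^ 2
          else (β / (2 * (α + β) * (b - x))) * (t - b + h * (b - a) / 2) ^ 2) * f'' t)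
      = tau a b h α β f f' x := by
  have hx : x ∈ uIcc a b := mem_uIcc_of_le hax.le hxb.le
  have hleft : uIcc a x ⊆ uIcc a b := uIcc_subset_uIcc_left hx
  have hright : uIcc x b ⊆ uIcc a b := uIcc_subset_uIcc_right hx
  have hxa_ne : x - a ≠ 0 := sub_ne_zero.2 hax.ne'
  have hbx_ne : b - x ≠ 0 := sub_ne_zero.2 hxb.ne'
  simp only [sub_sub _ a, sub_add _ b]
  rw [integral_ite_sub_sq_mul hax.le hxb.le hf'.intervalIntegrable,
    (hf.mono hleft).integral_sub_sq_mul_eq (hf'.mono hleft),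
    (hf.mono hright).integral_sub_sq_mul_eq (hf'.mono hright)]
  unfold tau intMean
  field_simp
  ring

theorem stmt_0 (a b h α β x : ℝ) (f f' f'' : ℝ → ℝ)
    (hab : a < b)
    (hh : h ∈ Set.Icc (0 : ℝ) 1)
    (hα : 0 ≤ α) (hβ : 0 ≤ β) (hαβ : 0 < α + β)
    (hax : a < x) (hxb : x < b)
    (hx1 : a + h * (b - a) / 2 ≤ x) (hx2 : x ≤ b - h * (b - a) / 2)
    (hfd : ∀ t ∈ Set.Icc a b, HasDerivAt f (f' t) t)
    (hf''int : IntervalIntegrable f'' MeasureTheory.volume a b)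
    (hac : ∀ t ∈ Set.Icc a b, f' t = f' a + ∫ u in a..t, f'' u)
    :
    (∫ t in a..b,
        (if t ≤ x then (α / (2 * (α + β) * (x - a))) * (t - a - h * (b - a) / 2) ^ 2
          else (β / (2 * (α + β) * (b - x))) * (t - b + h * (b - a) / 2) ^ 2) * f'' t)
      = tau a b h α β f f' x := by
  have hIcc : uIcc a b = Icc a b := uIcc_of_le hab.le
  have hf' : IsPrimitiveOn f' f'' a b := ⟨hf''int, hIcc ▸ hac⟩
  have hf : IsPrimitiveOn f f' a b :=
    .of_hasDerivAt (hIcc ▸ hfd) hf'.continuousOn.intervalIntegrable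
  exact stmt_0_general hαβ.ne' hax hxb hf hf' h
end

section
/- If f″ is essentially bounded on [a,b], then |τ(x;α,β)| ≤ (‖f″‖_∞/(6(α+β)))·[ (α/(x−a))·{(x−a−h(b−a)/2)³ + (h(b−a)/2)³} + (β/(b−x))·{(b−h(b−a)/2−x)³ + (h(b−a)/2)³} ], where ‖f″‖_∞ denotes the essential supremum of |f″| on [a,b]. -/
open MeasureTheory intervalIntegral

/-!
Integrating by parts twice on `[a, x]` and on `[x, b]` shows that `τ(x; α, β)` is the integral of
`f″` against the kernel which on `[a, x]` equals `(t - c)² / 2` times `α / ((x - a) (α + β))`, with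
`c = a + h (b - a) / 2`, and on `[x, b]` equals `(t - d)² / 2` times `β / ((b - x) (α + β))`, with
`d = b - h (b - a) / 2`. This kernel is nonnegative, so `|τ|` is at most `‖f″‖_∞` times its
integral.
-/

theorem absolutelyContinuousOnInterval_congr_s1 {X : Type*} [PseudoMetricSpace X] {f g : ℝ → X}
    {a b : ℝ} (hfg : Set.EqOn f g (Set.uIcc a b)) (hf : AbsolutelyContinuousOnInterval f a b) :
    AbsolutelyContinuousOnInterval g a b := by
  rw [absolutelyContinuousOnInterval_iff] at hf ⊢
  intro ε hε
  obtain ⟨δ, hδ, hsum_lt⟩ := hf ε hε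
  refine ⟨δ, hδ, fun E hE hlength => (Finset.sum_congr rfl fun i hi => ?_).trans_lt
    (hsum_lt E hE hlength)⟩
  obtain ⟨hleft, hright⟩ := hE.1 i hi
  rw [hfg hleft, hfg hright]

section Primitive

variable {g g' : ℝ → ℝ} {a b : ℝ}

theorem absolutelyContinuousOnInterval_of_eq_add_integral (hg' : IntervalIntegrable g' volume a b)
    (hg : ∀ t ∈ Set.uIcc a b, g t = g a + ∫ u in a..t, g' u) :
    AbsolutelyContinuousOnInterval g a b := by
  have const_ac : AbsolutelyContinuousOnInterval (fun _ => g a) a b :=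
    contDiffOn_const.absolutelyContinuousOnInterval
  exact absolutelyContinuousOnInterval_congr_s1 (fun t ht => (hg t ht).symm)
    (const_ac.fun_add (hg'.absolutelyContinuousOnInterval_intervalIntegral Set.left_mem_uIcc))

theorem deriv_ae_eq_of_eq_add_integral (hg' : IntervalIntegrable g' volume a b)
    (hg : ∀ t ∈ Set.uIcc a b, g t = g a + ∫ u in a..t, g' u) :
    deriv g =ᵐ[volume.restrict (Set.uIcc a b)] g' := by
  rw [Set.uIcc, ← restrict_Ioo_eq_restrict_Icc, Filter.EventuallyEq,
    ae_restrict_iff' measurableSet_Ioo]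
  filter_upwards [hg'.ae_hasDerivAt_integral] with t ht ht_mem
  have hderiv := (ht (Set.Ioo_subset_Icc_self ht_mem) a Set.left_mem_uIcc).const_add (g a)
  refine (hderiv.congr_of_eventuallyEq ?_).deriv
  filter_upwards [Icc_mem_nhds ht_mem.1 ht_mem.2] with s hs using hg s hs

end Primitive

theorem integral_sub_sq_div_two (c p q : ℝ) :
    ∫ t in p..q, (t - c) ^ 2 / 2 = ((q - c) ^ 3 - (p - c) ^ 3) / 6 := by
  rw [intervalIntegral.integral_div, integral_comp_sub_right (fun t => t ^ 2), integral_pow]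
  ring

theorem abs_integral_mul_le_of_ae_abs_le {w g : ℝ → ℝ} {p q K : ℝ} (hpq : p ≤ q)
    (hw : IntervalIntegrable w volume p q) (hw_nonneg : ∀ t ∈ Set.Icc p q, 0 ≤ w t)
    (hg : ∀ᵐ t ∂volume.restrict (Set.Icc p q), |g t| ≤ K) :
    |∫ t in p..q, w t * g t| ≤ K * ∫ t in p..q, w t := by
  rw [← intervalIntegral.integral_const_mul, ← Real.norm_eq_abs]
  refine norm_integral_le_of_norm_le hpq ?_ (hw.const_mul K)
  filter_upwards [(ae_restrict_iff' measurableSet_Icc).1 hg] with t ht ht_mem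
  have ht_Icc := Set.Ioc_subset_Icc_self ht_mem
  rw [norm_mul, Real.norm_of_nonneg (hw_nonneg t ht_Icc), mul_comm, Real.norm_eq_abs]
  exact mul_le_mul_of_nonneg_right (ht ht_Icc) (hw_nonneg t ht_Icc)

theorem abs_integral_sub_sq_div_two_mul_le {g : ℝ → ℝ} {p q K : ℝ} (c : ℝ) (hpq : p ≤ q)
    (hg : ∀ᵐ t ∂volume.restrict (Set.Icc p q), |g t| ≤ K) :
    |∫ t in p..q, (t - c) ^ 2 / 2 * g t| ≤ K * (((q - c) ^ 3 - (p - c) ^ 3) / 6) := by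
  rw [← integral_sub_sq_div_two]
  exact abs_integral_mul_le_of_ae_abs_le hpq
    (Continuous.intervalIntegrable (by fun_prop) p q) (fun t _ => by positivity) hg

theorem integral_sub_sq_div_two_mul_deriv {f f' : ℝ → ℝ} {p q : ℝ} (c : ℝ)
    (hf : ∀ t ∈ Set.uIcc p q, HasDerivWithinAt f (f' t) (Set.uIcc p q) t)
    (hf' : AbsolutelyContinuousOnInterval f' p q) :
    ∫ t in p..q, (t - c) ^ 2 / 2 * deriv f' t =
      (q - c) ^ 2 / 2 * f' q - (p - c) ^ 2 / 2 * f' p - ((q - c) * f q - (p - c) * f p)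
        + ∫ t in p..q, f t := by
  have hasDerivAt_kernel (t : ℝ) : HasDerivAt (fun t => (t - c) ^ 2 / 2) (t - c) t :=
    ((((hasDerivAt_id t).sub_const c).pow 2).div_const 2).congr_deriv (by simp)
  have deriv_kernel : deriv (fun t => (t - c) ^ 2 / 2) = fun t => t - c :=
    funext fun t => (hasDerivAt_kernel t).deriv
  have kernel_ac : AbsolutelyContinuousOnInterval (fun t => (t - c) ^ 2 / 2) p q :=
    ContDiffOn.absolutelyContinuousOnInterval (by fun_prop)
  have integral_deriv : ∫ t in p..q, (t - c) * f' t =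
      (q - c) * f q - (p - c) * f p - ∫ t in p..q, f t := by
    simpa only [one_mul] using integral_mul_deriv_eq_deriv_mul_of_hasDerivWithinAt
      (fun t _ => ((hasDerivAt_id' t).sub_const c).hasDerivWithinAt) hf intervalIntegrable_const
      hf'.continuousOn.intervalIntegrable
  rw [kernel_ac.integral_mul_deriv_eq_deriv_mul hf', deriv_kernel, integral_deriv]
  ring

theorem tau_eq_integral_mul_deriv {a b x : ℝ} {f f' : ℝ → ℝ} (h α β : ℝ)
    (hx : x ∈ Set.Icc a b)
    (hf : ∀ t ∈ Set.Icc a b, HasDerivWithinAt f (f' t) (Set.Icc a b) t)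
    (hf' : AbsolutelyContinuousOnInterval f' a b) :
    tau a b h α β f f' x =
      (α / (x - a) * (∫ t in a..x, (t - (a + h * (b - a) / 2)) ^ 2 / 2 * deriv f' t)
        + β / (b - x) * ∫ t in x..b, (t - (b - h * (b - a) / 2)) ^ 2 / 2 * deriv f' t)
      / (α + β) := by
  rw [← Set.uIcc_of_le (hx.1.trans hx.2)] at hf hx
  have hsub_left : Set.uIcc a x ⊆ Set.uIcc a b := Set.uIcc_subset_uIcc_left hx
  have hsub_right : Set.uIcc x b ⊆ Set.uIcc a b := Set.uIcc_subset_uIcc_right hx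
  rw [integral_sub_sq_div_two_mul_deriv _ (fun t ht => (hf t (hsub_left ht)).mono hsub_left)
      (hf'.mono hsub_left),
    integral_sub_sq_div_two_mul_deriv _ (fun t ht => (hf t (hsub_right ht)).mono hsub_right)
      (hf'.mono hsub_right)]
  unfold tau intMean
  generalize α + β = s
  ring

theorem stmt_1_general {a b α β x K : ℝ} {f f' : ℝ → ℝ} (h : ℝ)
    (hα : 0 ≤ α) (hβ : 0 ≤ β) (hαβ : 0 < α + β) (hax : a < x) (hxb : x < b)
    (hf : ∀ t ∈ Set.Icc a b, HasDerivWithinAt f (f' t) (Set.Icc a b) t)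
    (hf' : AbsolutelyContinuousOnInterval f' a b)
    (hK : ∀ᵐ t ∂volume.restrict (Set.Icc a b), |deriv f' t| ≤ K) :
    |tau a b h α β f f' x| ≤
      (K / (6 * (α + β))) *
      ((α / (x - a)) * ((x - a - h * (b - a) / 2) ^ 3 + (h * (b - a) / 2) ^ 3)
        + (β / (b - x)) * ((b - h * (b - a) / 2 - x) ^ 3 + (h * (b - a) / 2) ^ 3)) := by
  have hleft := abs_integral_sub_sq_div_two_mul_le (a + h * (b - a) / 2) hax.le
    (ae_restrict_of_ae_restrict_of_subset (Set.Icc_subset_Icc_right hxb.le) hK)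
  have hright := abs_integral_sub_sq_div_two_mul_le (b - h * (b - a) / 2) hxb.le
    (ae_restrict_of_ae_restrict_of_subset (Set.Icc_subset_Icc_left hax.le) hK)
  have hα_weight : 0 ≤ α / (x - a) := div_nonneg hα (sub_pos.2 hax).le
  have hβ_weight : 0 ≤ β / (b - x) := div_nonneg hβ (sub_pos.2 hxb).le
  rw [tau_eq_integral_mul_deriv h α β ⟨hax.le, hxb.le⟩ hf hf', abs_div, abs_of_pos hαβ,
    div_le_iff₀ hαβ]
  refine (abs_add_le _ _).trans ?_
  rw [abs_mul, abs_mul, abs_of_nonneg hα_weight, abs_of_nonneg hβ_weight]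
  refine (add_le_add (mul_le_mul_of_nonneg_left hleft hα_weight)
    (mul_le_mul_of_nonneg_left hright hβ_weight)).trans_eq ?_
  field_simp
  ring

theorem stmt_1 (a b h α β x : ℝ) (f f' f'' : ℝ → ℝ)
    (hab : a < b)
    (hh : h ∈ Set.Icc (0 : ℝ) 1)
    (hα : 0 ≤ α) (hβ : 0 ≤ β) (hαβ : 0 < α + β)
    (hax : a < x) (hxb : x < b)
    (hx1 : a + h * (b - a) / 2 ≤ x) (hx2 : x ≤ b - h * (b - a) / 2)
    (hfd : ∀ t ∈ Set.Icc a b, HasDerivAt f (f' t) t)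
    (hf''int : IntervalIntegrable f'' MeasureTheory.volume a b)
    (hac : ∀ t ∈ Set.Icc a b, f' t = f' a + ∫ u in a..t, f'' u)
    (K : ℝ) (hK : ∀ᵐ t ∂MeasureTheory.volume.restrict (Set.Icc a b), |f'' t| ≤ K)
    :
    |tau a b h α β f f' x| ≤
      (K / (6 * (α + β))) *
      ((α / (x - a)) * ((x - a - h * (b - a) / 2) ^ 3 + (h * (b - a) / 2) ^ 3)
        + (β / (b - x)) * ((b - h * (b - a) / 2 - x) ^ 3 + (h * (b - a) / 2) ^ 3)) := by
  rw [← Set.uIcc_of_le hab.le] at hac hK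
  refine stmt_1_general h hα hβ hαβ hax hxb (fun t ht => (hfd t ht).hasDerivWithinAt)
    (absolutelyContinuousOnInterval_of_eq_add_integral hf''int hac) ?_
  rw [← Set.uIcc_of_le hab.le]
  filter_upwards [deriv_ae_eq_of_eq_add_integral hf''int hac, hK] with t ht hKt using ht ▸ hKt
end

section
/- If f″ ∈ L_1[a,b], then |τ(x;α,β)| ≤ (‖f″‖_1/(2(α+β)))·max{ (α/(x−a))·(x−a−h(b−a)/2)², (α/(x−a))·(h(b−a)/2)², (β/(b−x))·(b−h(b−a)/2−x)², (β/(b−x))·(h(b−a)/2)² }, where ‖f″‖_1 = ∫_a^b |f″(t)| dt. -/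
open MeasureTheory intervalIntegral

/-!
On `[a, x]` and on `[x, b]` integrate `f''` by parts twice against the parabola `(t - c) ^ 2`, with
`c = a + h (b - a) / 2` on the left and `c = b - h (b - a) / 2` on the right. Weighting the two
halves by `α / (x - a)` and `β / (b - x)` gives `2 (α + β) τ(x; α, β) = ∫ K f''`, where the kernel
`K` is a nonnegative parabola on each side of `x`. By convexity `K` is at most the largest of its
four endpoint values, which bounds `|∫ K f''|` by this value times `‖f''‖₁`.
-/

open Set
open scoped Interval

/-- `F` is an indefinite integral of `φ` on the interval with endpoints `a` and `b`: the form in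
which absolute continuity is used here, with `φ` standing for the almost everywhere derivative. -/
structure IsIndefiniteIntegralOn (F φ : ℝ → ℝ) (a b : ℝ) : Prop where
  intervalIntegrable : IntervalIntegrable φ volume a b
  integral_eq_sub : ∀ s ∈ [[a, b]], ∀ t ∈ [[a, b]], ∫ u in s..t, φ u = F t - F s

namespace IsIndefiniteIntegralOn

variable {F G φ ψ : ℝ → ℝ} {a b : ℝ}

theorem of_eq_add_integral (hφ : IntervalIntegrable φ volume a b)
    (hF : ∀ t ∈ [[a, b]], F t = F a + ∫ u in a..t, φ u) : IsIndefiniteIntegralOn F φ a b where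
  intervalIntegrable := hφ
  integral_eq_sub s hs t ht := by
    have integrable_left {r : ℝ} (hr : r ∈ [[a, b]]) : IntervalIntegrable φ volume a r :=
      hφ.mono_set (uIcc_subset_uIcc_left hr)
    rw [hF t ht, hF s hs, add_sub_add_left_eq_sub,
      integral_interval_sub_left (integrable_left ht) (integrable_left hs)]

theorem of_hasDerivWithinAt (hφ : IntervalIntegrable φ volume a b)
    (hF : ∀ t ∈ [[a, b]], HasDerivWithinAt F (φ t) [[a, b]] t) :
    IsIndefiniteIntegralOn F φ a b where
  intervalIntegrable := hφ
  integral_eq_sub s hs t ht := by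
    have hst : [[s, t]] ⊆ [[a, b]] := uIcc_subset_uIcc hs ht
    refine integral_eq_sub_of_hasDeriv_right
      (HasDerivWithinAt.continuousOn fun r hr ↦ (hF r (hst hr)).mono hst)
      (fun r hr ↦ ?_) (hφ.mono_set hst)
    have hr' : r ∈ [[s, t]] := Ioo_subset_Icc_self hr
    exact ((hF r (hst hr')).hasDerivAt
      (Filter.mem_of_superset (Icc_mem_nhds hr.1 hr.2) hst)).hasDerivWithinAt

theorem mono {c d : ℝ} (hF : IsIndefiniteIntegralOn F φ a b) (h : [[c, d]] ⊆ [[a, b]]) :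
    IsIndefiniteIntegralOn F φ c d where
  intervalIntegrable := hF.intervalIntegrable.mono_set h
  integral_eq_sub s hs t ht := hF.integral_eq_sub s (h hs) t (h ht)

theorem eq_add_integral (hF : IsIndefiniteIntegralOn F φ a b) {t : ℝ} (ht : t ∈ [[a, b]]) :
    F t = F a + ∫ u in a..t, φ u := by
  rw [hF.integral_eq_sub a left_mem_uIcc t ht, add_sub_cancel]

theorem continuousOn (hF : IsIndefiniteIntegralOn F φ a b) : ContinuousOn F [[a, b]] :=
  (continuousOn_const.add (continuousOn_primitive_interval' hF.intervalIntegrable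
    left_mem_uIcc)).congr fun _ ht ↦ hF.eq_add_integral ht

theorem exists_absolutelyContinuousOnInterval (hF : IsIndefiniteIntegralOn F φ a b) :
    ∃ H : ℝ → ℝ, AbsolutelyContinuousOnInterval H a b ∧ EqOn F H [[a, b]] ∧
      ∀ᵐ t, t ∈ [[a, b]] → deriv H t = φ t := by
  refine ⟨fun t ↦ F a + ∫ u in a..t, φ u, ?_, fun t ht ↦ hF.eq_add_integral ht, ?_⟩
  · exact contDiff_const.contDiffOn.absolutelyContinuousOnInterval.fun_add
      (hF.intervalIntegrable.absolutelyContinuousOnInterval_intervalIntegral left_mem_uIcc)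
  · filter_upwards [hF.intervalIntegrable.ae_hasDerivAt_integral] with t hderiv ht
    exact ((hderiv ht a left_mem_uIcc).const_add (F a)).deriv

theorem integral_mul (hF : IsIndefiniteIntegralOn F φ a b) (hG : IsIndefiniteIntegralOn G ψ a b) :
    ∫ t in a..b, F t * ψ t = F b * G b - F a * G a - ∫ t in a..b, φ t * G t := by
  obtain ⟨F', acF', hFF', derivF'⟩ := hF.exists_absolutelyContinuousOnInterval
  obtain ⟨G', acG', hGG', derivG'⟩ := hG.exists_absolutelyContinuousOnInterval
  have integral_left : ∫ t in a..b, F t * ψ t = ∫ t in a..b, F' t * deriv G' t := by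
    refine integral_congr_ae ?_
    filter_upwards [derivG'] with t ht htab
    rw [hFF' (uIoc_subset_uIcc htab), ht (uIoc_subset_uIcc htab)]
  have integral_right : ∫ t in a..b, φ t * G t = ∫ t in a..b, deriv F' t * G' t := by
    refine integral_congr_ae ?_
    filter_upwards [derivF'] with t ht htab
    rw [hGG' (uIoc_subset_uIcc htab), ht (uIoc_subset_uIcc htab)]
  rw [integral_left, integral_right, acF'.integral_mul_deriv_eq_deriv_mul acG',
    hFF' left_mem_uIcc, hFF' right_mem_uIcc, hGG' left_mem_uIcc, hGG' right_mem_uIcc]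

theorem integral_mul_second {w w' w'' f f' f'' : ℝ → ℝ}
    (hw : IsIndefiniteIntegralOn w w' a b) (hw' : IsIndefiniteIntegralOn w' w'' a b)
    (hf : IsIndefiniteIntegralOn f f' a b) (hf' : IsIndefiniteIntegralOn f' f'' a b) :
    ∫ t in a..b, w t * f'' t =
      (w b * f' b - w' b * f b) - (w a * f' a - w' a * f a) + ∫ t in a..b, w'' t * f t := by
  rw [hw.integral_mul hf', hw'.integral_mul hf]
  ring

theorem integral_sq_sub_mul {f f' f'' : ℝ → ℝ} (hf : IsIndefiniteIntegralOn f f' a b)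
    (hf' : IsIndefiniteIntegralOn f' f'' a b) (c : ℝ) :
    ∫ t in a..b, (t - c) ^ 2 * f'' t =
      ((b - c) ^ 2 * f' b - 2 * (b - c) * f b) - ((a - c) ^ 2 * f' a - 2 * (a - c) * f a) +
        2 * ∫ t in a..b, f t := by
  have hw : IsIndefiniteIntegralOn (fun t ↦ (t - c) ^ 2) (fun t ↦ 2 * (t - c)) a b :=
    of_hasDerivWithinAt (Continuous.intervalIntegrable (by fun_prop) a b) fun t _ ↦ by
      simpa using (((hasDerivAt_id t).sub_const c).fun_pow 2).hasDerivWithinAt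
  have hw' : IsIndefiniteIntegralOn (fun t ↦ 2 * (t - c)) (fun _ ↦ 2) a b :=
    of_hasDerivWithinAt intervalIntegrable_const fun t _ ↦ by
      simpa using (((hasDerivAt_id t).sub_const c).const_mul 2).hasDerivWithinAt
  rw [hw.integral_mul_second hw' hf hf', intervalIntegral.integral_const_mul]

end IsIndefiniteIntegralOn

theorem integral_ite_le_eq_add {E : Type*} [NormedAddCommGroup E] [NormedSpace ℝ E]
    {μ : Measure ℝ} {u v : ℝ → E} {a b x : ℝ} (hax : a ≤ x) (hxb : x ≤ b)
    (hu : IntervalIntegrable u μ a x) (hv : IntervalIntegrable v μ x b) :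
    ∫ t in a..b, (if t ≤ x then u t else v t) ∂μ = (∫ t in a..x, u t ∂μ) + ∫ t in x..b, v t ∂μ := by
  have eq_left : EqOn u (fun t ↦ if t ≤ x then u t else v t) (Ι a x) := fun t ht ↦ by
    rw [uIoc_of_le hax] at ht
    exact (if_pos ht.2).symm
  have eq_right : EqOn v (fun t ↦ if t ≤ x then u t else v t) (Ι x b) := fun t ht ↦ by
    rw [uIoc_of_le hxb] at ht
    exact (if_neg ht.1.not_ge).symm
  rw [← integral_add_adjacent_intervals (hu.congr eq_left) (hv.congr eq_right),
    integral_congr_ae (.of_forall eq_left), integral_congr_ae (.of_forall eq_right)]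

theorem abs_integral_mul_le_of_abs_le {μ : Measure ℝ} {k g : ℝ → ℝ} {a b C : ℝ} (hab : a ≤ b)
    (hg : IntervalIntegrable g μ a b) (hk : ∀ t ∈ Icc a b, |k t| ≤ C) :
    |∫ t in a..b, k t * g t ∂μ| ≤ C * ∫ t in a..b, |g t| ∂μ := by
  rw [← intervalIntegral.integral_const_mul, ← Real.norm_eq_abs]
  refine norm_integral_le_of_norm_le hab (.of_forall fun t ht ↦ ?_) (hg.abs.const_mul C)
  rw [Real.norm_eq_abs, abs_mul]
  gcongr
  exact hk t (Ioc_subset_Icc_self ht)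

theorem sq_sub_le_max_of_mem_Icc {p q t : ℝ} (c : ℝ) (ht : t ∈ Icc p q) :
    (t - c) ^ 2 ≤ max ((p - c) ^ 2) ((q - c) ^ 2) :=
  even_two.convexOn_pow.le_max_of_mem_Icc (mem_univ (p - c)) (mem_univ (q - c))
    ⟨sub_le_sub_right ht.1 c, sub_le_sub_right ht.2 c⟩

/-- The kernel made of the parabola `A * (t - c) ^ 2` up to the break point `x` and of
`B * (t - d) ^ 2` after it. It is the Peano kernel of second order of the functionals that combine
a rule on `[a, x]` and a rule on `[x, b]`. -/
noncomputable def quadraticKernel (x A c B d t : ℝ) : ℝ :=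
  if t ≤ x then A * (t - c) ^ 2 else B * (t - d) ^ 2

section quadraticKernel

variable {a b x A c B d : ℝ}

theorem integral_quadraticKernel_mul {f f' f'' : ℝ → ℝ} (hax : a ≤ x) (hxb : x ≤ b)
    (hf : IsIndefiniteIntegralOn f f' a b) (hf' : IsIndefiniteIntegralOn f' f'' a b) :
    ∫ t in a..b, quadraticKernel x A c B d t * f'' t =
      A * (((x - c) ^ 2 * f' x - 2 * (x - c) * f x) - ((a - c) ^ 2 * f' a - 2 * (a - c) * f a) +
        2 * ∫ t in a..x, f t) +
      B * (((b - d) ^ 2 * f' b - 2 * (b - d) * f b) - ((x - d) ^ 2 * f' x - 2 * (x - d) * f x) +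
        2 * ∫ t in x..b, f t) := by
  have hx : x ∈ [[a, b]] := Icc_subset_uIcc ⟨hax, hxb⟩
  have left : [[a, x]] ⊆ [[a, b]] := uIcc_subset_uIcc_left hx
  have right : [[x, b]] ⊆ [[a, b]] := uIcc_subset_uIcc_right hx
  have integrable_parabola_mul (C e : ℝ) :
      IntervalIntegrable (fun t ↦ C * (t - e) ^ 2 * f'' t) volume a b :=
    hf'.intervalIntegrable.continuousOn_mul (by fun_prop)
  simp only [quadraticKernel, ite_mul]
  rw [integral_ite_le_eq_add hax hxb ((integrable_parabola_mul A c).mono_set left)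
    ((integrable_parabola_mul B d).mono_set right)]
  simp only [mul_assoc A, mul_assoc B, intervalIntegral.integral_const_mul]
  rw [(hf.mono left).integral_sq_sub_mul (hf'.mono left),
    (hf.mono right).integral_sq_sub_mul (hf'.mono right)]

theorem quadraticKernel_nonneg (hA : 0 ≤ A) (hB : 0 ≤ B) (t : ℝ) :
    0 ≤ quadraticKernel x A c B d t := by
  unfold quadraticKernel
  split_ifs <;> positivity

theorem quadraticKernel_le_max (hA : 0 ≤ A) (hB : 0 ≤ B) {t : ℝ} (ht : t ∈ Icc a b) :
    quadraticKernel x A c B d t ≤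
      max (max (A * (x - c) ^ 2) (A * (c - a) ^ 2)) (max (B * (d - x) ^ 2) (B * (b - d) ^ 2)) := by
  rw [← mul_max_of_nonneg _ _ hA, ← mul_max_of_nonneg _ _ hB, quadraticKernel]
  split_ifs with htx
  · refine le_max_of_le_left (mul_le_mul_of_nonneg_left ?_ hA)
    rw [max_comm, sub_sq_comm c a]
    exact sq_sub_le_max_of_mem_Icc c ⟨ht.1, htx⟩
  · refine le_max_of_le_right (mul_le_mul_of_nonneg_left ?_ hB)
    rw [sub_sq_comm d x]
    exact sq_sub_le_max_of_mem_Icc d ⟨(not_le.mp htx).le, ht.2⟩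

theorem abs_integral_quadraticKernel_mul_le {g : ℝ → ℝ} (hab : a ≤ b) (hA : 0 ≤ A) (hB : 0 ≤ B)
    (hg : IntervalIntegrable g volume a b) :
    |∫ t in a..b, quadraticKernel x A c B d t * g t| ≤
      max (max (A * (x - c) ^ 2) (A * (c - a) ^ 2)) (max (B * (d - x) ^ 2) (B * (b - d) ^ 2)) *
        ∫ t in a..b, |g t| :=
  abs_integral_mul_le_of_abs_le hab hg fun t ht ↦ by
    rw [abs_of_nonneg (quadraticKernel_nonneg hA hB t)]
    exact quadraticKernel_le_max hA hB ht

end quadraticKernel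

theorem tau_eq_integral_quadraticKernel_mul {a b h α β x : ℝ} {f f' f'' : ℝ → ℝ}
    (hαβ : α + β ≠ 0) (hax : a < x) (hxb : x < b)
    (hf : IsIndefiniteIntegralOn f f' a b) (hf' : IsIndefiniteIntegralOn f' f'' a b) :
    tau a b h α β f f' x = 1 / (2 * (α + β)) *
      ∫ t in a..b, quadraticKernel x (α / (x - a)) (a + h * (b - a) / 2)
        (β / (b - x)) (b - h * (b - a) / 2) t * f'' t := by
  have hxa : x - a ≠ 0 := (sub_pos.mpr hax).ne'
  have hbx : b - x ≠ 0 := (sub_pos.mpr hxb).ne'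
  rw [integral_quadraticKernel_mul hax.le hxb.le hf hf', tau, intMean, intMean]
  field_simp
  ring

theorem stmt_3_general {a b h α β x : ℝ} {f f' f'' : ℝ → ℝ}
    (hα : 0 ≤ α) (hβ : 0 ≤ β) (hαβ : 0 < α + β) (hax : a < x) (hxb : x < b)
    (hfd : ∀ t ∈ Icc a b, HasDerivWithinAt f (f' t) (Icc a b) t)
    (hf''int : IntervalIntegrable f'' volume a b)
    (hac : ∀ t ∈ Icc a b, f' t = f' a + ∫ u in a..t, f'' u) :
    |tau a b h α β f f' x| ≤
      ((∫ t in a..b, |f'' t|) / (2 * (α + β))) *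
      max (max ((α / (x - a)) * (x - a - h * (b - a) / 2) ^ 2)
            ((α / (x - a)) * (h * (b - a) / 2) ^ 2))
          (max ((β / (b - x)) * (b - h * (b - a) / 2 - x) ^ 2)
            ((β / (b - x)) * (h * (b - a) / 2) ^ 2)) := by
  have hab : a ≤ b := (hax.trans hxb).le
  rw [← uIcc_of_le hab] at hfd hac
  have hf' : IsIndefiniteIntegralOn f' f'' a b := .of_eq_add_integral hf''int hac
  have hf : IsIndefiniteIntegralOn f f' a b :=
    .of_hasDerivWithinAt hf'.continuousOn.intervalIntegrable hfd
  have kernel_bound := abs_integral_quadraticKernel_mul_le (x := x) (c := a + h * (b - a) / 2)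
    (d := b - h * (b - a) / 2) hab (div_nonneg hα (sub_nonneg.mpr hax.le))
    (div_nonneg hβ (sub_nonneg.mpr hxb.le)) hf''int
  rw [← sub_sub x a, add_sub_cancel_left, sub_sub_cancel b] at kernel_bound
  rw [tau_eq_integral_quadraticKernel_mul hαβ.ne' hax hxb hf hf', abs_mul,
    abs_of_pos (by positivity)]
  refine (mul_le_mul_of_nonneg_left kernel_bound (by positivity)).trans_eq ?_
  ring

theorem stmt_3 (a b h α β x : ℝ) (f f' f'' : ℝ → ℝ)
    (hab : a < b)
    (hh : h ∈ Set.Icc (0 : ℝ) 1)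
    (hα : 0 ≤ α) (hβ : 0 ≤ β) (hαβ : 0 < α + β)
    (hax : a < x) (hxb : x < b)
    (hx1 : a + h * (b - a) / 2 ≤ x) (hx2 : x ≤ b - h * (b - a) / 2)
    (hfd : ∀ t ∈ Set.Icc a b, HasDerivAt f (f' t) t)
    (hf''int : IntervalIntegrable f'' MeasureTheory.volume a b)
    (hac : ∀ t ∈ Set.Icc a b, f' t = f' a + ∫ u in a..t, f'' u)
    :
    |tau a b h α β f f' x| ≤
      ((∫ t in a..b, |f'' t|) / (2 * (α + β))) *
      max (max ((α / (x - a)) * (x - a - h * (b - a) / 2) ^ 2)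
            ((α / (x - a)) * (h * (b - a) / 2) ^ 2))
          (max ((β / (b - x)) * (b - h * (b - a) / 2 - x) ^ 2)
            ((β / (b - x)) * (h * (b - a) / 2) ^ 2)) :=
  stmt_3_general hα hβ hαβ hax hxb (fun t ht ↦ (hfd t ht).hasDerivWithinAt) hf''int hac
end

section
/- If f″ is essentially bounded on [a,b], then |τ₀(x;α,β)| ≤ [α(x−a)² + β(b−x)²]·‖f″‖_∞/(6(α+β)), where ‖f″‖_∞ denotes the essential supremum of |f″| on [a,b]. -/
open MeasureTheory intervalIntegral

/-- The functional τ₀(x; α, β) (the case h = 0). -/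
noncomputable def tau0 (a b α β : ℝ) (f f' : ℝ → ℝ) (x : ℝ) : ℝ :=
  (1 / (2 * (α + β))) * (α * (x - a) - β * (b - x)) * f' x - f x
  + (1 / (α + β)) * (α * intMean f a x + β * intMean f x b)

/-!
Since `|f' t - f' x| ≤ K |t - x|`, the Taylor remainder `R t = f t - f x - (t - x) f' x` satisfies
`|R t| ≤ K (t - x)² / 2`. The functional `τ₀` is the mean, with weights `α` and `β`, of the averages
of `R` over `[a, x]` and `[x, b]`, and averaging `(t - x)²` over an interval with endpoint `x` gains
a factor `1 / 3`.
-/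

open Set
open scoped Interval

section TaylorRemainder

variable {E F : Type*} [NormedAddCommGroup E] [NormedSpace ℝ E]
  [NormedAddCommGroup F] [NormedSpace ℝ F] {C : ℝ} {n : ℕ}

theorem norm_image_sub_sub_le_of_norm_hasFDerivWithin_sub_le_pow {f : E → F} {f' : E → E →L[ℝ] F}
    {s : Set E} {x y : E} (hs : StarConvex ℝ x s) (hy : y ∈ s)
    (hf : ∀ z ∈ s, HasFDerivWithinAt f (f' z) s z)
    (hf' : ∀ z ∈ s, ‖f' z - f' x‖ ≤ C * ‖z - x‖ ^ n) :
    ‖f y - f x - f' x (y - x)‖ ≤ C * ‖y - x‖ ^ (n + 1) / (n + 1) := by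
  let γ : ℝ → E := AffineMap.lineMap x y
  have hγs : MapsTo γ (Icc 0 1) s := fun r hr ↦
    hs.segment_subset hy (segment_eq_image_lineMap ℝ x y ▸ mem_image_of_mem _ hr)
  have hγ (r : ℝ) : γ r - x = r • (y - x) := by simp [γ, AffineMap.lineMap_apply]
  let R : ℝ → F := fun r ↦ f (γ r) - f x - r • f' x (y - x)
  have hR : ∀ r ∈ Icc (0 : ℝ) 1,
      HasDerivWithinAt R ((f' (γ r) - f' x) (y - x)) (Icc 0 1) r := fun r hr ↦ by
    have hfγ := (hf (γ r) (hγs hr)).comp_hasDerivWithinAt r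
      AffineMap.hasDerivWithinAt_lineMap hγs
    exact ((hfγ.sub_const (f x)).sub
      ((hasDerivWithinAt_id r _).smul_const (f' x (y - x)))).congr_deriv (by simp)
  have hB (r : ℝ) : HasDerivAt (fun r ↦ C * ‖y - x‖ ^ (n + 1) / (n + 1) * r ^ (n + 1))
      (C * ‖y - x‖ ^ (n + 1) * r ^ n) r := by
    convert! (hasDerivAt_pow (n + 1) r).const_mul (C * ‖y - x‖ ^ (n + 1) / (n + 1)) using 1
    rw [Nat.cast_succ, Nat.add_sub_cancel]
    field_simp
  have hbound : ∀ r ∈ Ico (0 : ℝ) 1,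
      ‖(f' (γ r) - f' x) (y - x)‖ ≤ C * ‖y - x‖ ^ (n + 1) * r ^ n := fun r hr ↦
    calc ‖(f' (γ r) - f' x) (y - x)‖
      _ ≤ ‖f' (γ r) - f' x‖ * ‖y - x‖ := ContinuousLinearMap.le_opNorm _ _
      _ ≤ C * ‖γ r - x‖ ^ n * ‖y - x‖ := by
        gcongr
        exact hf' _ (hγs (Ico_subset_Icc_self hr))
      _ = C * ‖y - x‖ ^ (n + 1) * r ^ n := by
        rw [hγ, norm_smul, Real.norm_of_nonneg hr.1]
        ring
  have hR_one := image_norm_le_of_norm_deriv_right_le_deriv_boundary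
    (fun r hr ↦ (hR r hr).continuousWithinAt)
    (fun r hr ↦ (hR r (Ico_subset_Icc_self hr)).mono_of_mem_nhdsWithin (Icc_mem_nhdsGE_of_mem hr))
    (by simp [R, γ]) hB hbound (right_mem_Icc.2 zero_le_one)
  simpa [R, γ] using hR_one

theorem norm_image_sub_sub_le_of_norm_hasDerivWithin_sub_le_pow {f f' : ℝ → E} {s : Set ℝ}
    {x y : ℝ} (hs : StarConvex ℝ x s) (hy : y ∈ s)
    (hf : ∀ t ∈ s, HasDerivWithinAt f (f' t) s t)
    (hf' : ∀ t ∈ s, ‖f' t - f' x‖ ≤ C * |t - x| ^ n) :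
    ‖f y - f x - (y - x) • f' x‖ ≤ C * |y - x| ^ (n + 1) / (n + 1) := by
  simpa using norm_image_sub_sub_le_of_norm_hasFDerivWithin_sub_le_pow hs hy
    (fun t ht ↦ (hf t ht).hasFDerivWithinAt) fun t ht ↦ by
      rw [← ContinuousLinearMap.toSpanSingletonLIE_apply,
        ← ContinuousLinearMap.toSpanSingletonLIE_apply, ← map_sub, LinearIsometryEquiv.norm_map]
      exact hf' t ht

end TaylorRemainder

section IntervalAverage

variable {E : Type*} [NormedAddCommGroup E] [NormedSpace ℝ E] {x y : ℝ}

theorem norm_intervalAverage_le_of_norm_le_pow {g : ℝ → E} {C : ℝ} {n : ℕ} (hxy : x ≠ y)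
    (hg : ∀ t ∈ Ι x y, ‖g t‖ ≤ C * |t - x| ^ n) :
    ‖⨍ t in x..y, g t‖ ≤ C * |y - x| ^ n / (n + 1) := by
  have hne : |y - x| ≠ 0 := abs_ne_zero.2 (sub_ne_zero.2 hxy.symm)
  have hint : IntegrableOn (fun t ↦ C * |t - x| ^ n) (Ι x y) :=
    intervalIntegrable_iff.1 (Continuous.intervalIntegrable (by fun_prop) x y)
  have hnorm : ‖∫ t in Ι x y, g t‖ ≤ C * (|y - x| ^ (n + 1) / (n + 1)) := by
    rw [← integral_pow_abs_sub_uIoc, ← MeasureTheory.integral_const_mul]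
    exact norm_integral_le_of_norm_le hint (ae_restrict_of_forall_mem measurableSet_uIoc hg)
  calc ‖⨍ t in x..y, g t‖
    _ = |y - x|⁻¹ * ‖∫ t in Ι x y, g t‖ := by
      rw [interval_average_eq, norm_smul, norm_inv, Real.norm_eq_abs,
        norm_integral_eq_norm_integral_uIoc]
    _ ≤ |y - x|⁻¹ * (C * (|y - x| ^ (n + 1) / (n + 1))) := by gcongr
    _ = C * |y - x| ^ n / (n + 1) := by
      field_simp [hne]
      ring

theorem intervalAverage_sub_affine [CompleteSpace E] {f : ℝ → E} (hxy : x ≠ y)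
    (hf : IntervalIntegrable f volume x y) (c v : E) :
    ⨍ t in x..y, (f t - c - (t - x) • v) = (⨍ t in x..y, f t) - c - ((y - x) / 2) • v := by
  have hlinear : ∫ t in x..y, (t - x) • v = ((y - x) ^ 2 / 2) • v := by
    rw [intervalIntegral.integral_smul_const, integral_comp_sub_right (fun t ↦ t), integral_id]
    simp
  have hne : y - x ≠ 0 := sub_ne_zero.2 hxy.symm
  rw [interval_average_eq, interval_average_eq,
    intervalIntegral.integral_sub (hf.sub intervalIntegrable_const)
      (Continuous.intervalIntegrable (by fun_prop) _ _),
    intervalIntegral.integral_sub hf intervalIntegrable_const, intervalIntegral.integral_const,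
    hlinear, smul_sub, smul_sub, inv_smul_smul₀ hne, smul_smul]
  congr 2
  field_simp

theorem norm_intervalAverage_taylor_remainder_le {f f' : ℝ → E} {s : Set ℝ} {C : ℝ} {n : ℕ}
    (hs : StarConvex ℝ x s) (hy : y ∈ s) (hxy : x ≠ y)
    (hf : ∀ t ∈ s, HasDerivWithinAt f (f' t) s t)
    (hf' : ∀ t ∈ s, ‖f' t - f' x‖ ≤ C * |t - x| ^ n) :
    ‖⨍ t in x..y, (f t - f x - (t - x) • f' x)‖ ≤
      C * |y - x| ^ (n + 1) / ((n + 1) * (n + 2)) := by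
  have hsub : Ι x y ⊆ s :=
    uIoc_subset_uIcc.trans (segment_eq_uIcc x y ▸ hs.segment_subset hy)
  refine (norm_intervalAverage_le_of_norm_le_pow (C := C / (n + 1)) (n := n + 1) hxy
    fun t ht ↦ ?_).trans_eq ?_
  · rw [div_mul_eq_mul_div]
    exact norm_image_sub_sub_le_of_norm_hasDerivWithin_sub_le_pow hs (hsub ht) hf hf'
  · push_cast
    field_simp
    ring

end IntervalAverage

theorem norm_integral_sub_integral_le_of_norm_le_const_ae {E : Type*} [NormedAddCommGroup E]
    [NormedSpace ℝ E] {g : ℝ → E} {a b s t C : ℝ} (hg : IntervalIntegrable g volume a b)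
    (hC : ∀ᵐ u ∂volume.restrict [[a, b]], ‖g u‖ ≤ C) (hs : s ∈ [[a, b]]) (ht : t ∈ [[a, b]]) :
    ‖(∫ u in a..t, g u) - ∫ u in a..s, g u‖ ≤ C * |t - s| := by
  have hint : ∀ r ∈ [[a, b]], IntervalIntegrable g volume a r := fun r hr ↦
    hg.mono_set (uIcc_subset_uIcc_left hr)
  rw [integral_interval_sub_left (hint t ht) (hint s hs)]
  refine norm_integral_le_of_norm_le_const_ae ?_
  filter_upwards [(ae_restrict_iff' measurableSet_uIcc).1 hC] with u hu hust
  exact hu (uIcc_subset_uIcc hs ht (uIoc_subset_uIcc hust))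

theorem intMean_eq_intervalAverage (f : ℝ → ℝ) (c d : ℝ) : intMean f c d = ⨍ t in c..d, f t := by
  rw [intMean, interval_average_eq, one_div, smul_eq_mul]

theorem tau0_eq_weighted_intervalAverage_taylor_remainder {a b α β x : ℝ} {f : ℝ → ℝ}
    (hαβ : α + β ≠ 0) (hax : a ≠ x) (hxb : x ≠ b)
    (hfa : IntervalIntegrable f volume x a) (hfb : IntervalIntegrable f volume x b) (f' : ℝ → ℝ) :
    tau0 a b α β f f' x =
      (α * (⨍ t in x..a, (f t - f x - (t - x) • f' x)) +
        β * ⨍ t in x..b, (f t - f x - (t - x) • f' x)) / (α + β) := by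
  rw [intervalAverage_sub_affine hax.symm hfa, intervalAverage_sub_affine hxb hfb, tau0,
    intMean_eq_intervalAverage, intMean_eq_intervalAverage, interval_average_symm f a x,
    smul_eq_mul, smul_eq_mul]
  field_simp
  ring

theorem stmt_4_general {a b α β x K : ℝ} {f f' : ℝ → ℝ}
    (hα : 0 ≤ α) (hβ : 0 ≤ β) (hαβ : 0 < α + β) (hax : a < x) (hxb : x < b)
    (hf : ∀ t ∈ Icc a b, HasDerivWithinAt f (f' t) (Icc a b) t)
    (hf' : ∀ t ∈ Icc a b, |f' t - f' x| ≤ K * |t - x|) :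
    |tau0 a b α β f f' x| ≤ (α * (x - a) ^ 2 + β * (b - x) ^ 2) * K / (6 * (α + β)) := by
  have hx : x ∈ Icc a b := ⟨hax.le, hxb.le⟩
  have ha : a ∈ Icc a b := left_mem_Icc.2 (hax.trans hxb).le
  have hb : b ∈ Icc a b := right_mem_Icc.2 (hax.trans hxb).le
  have hfint {y : ℝ} (hy : y ∈ Icc a b) : IntervalIntegrable f volume x y :=
    ContinuousOn.intervalIntegrable fun t ht ↦
      ((hf t (uIcc_subset_Icc hx hy ht)).continuousWithinAt).mono (uIcc_subset_Icc hx hy)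
  have hrem {y : ℝ} (hy : y ∈ Icc a b) (hxy : x ≠ y) :
      |⨍ t in x..y, (f t - f x - (t - x) • f' x)| ≤ K * (y - x) ^ 2 / 6 := by
    refine (norm_intervalAverage_taylor_remainder_le (n := 1) ((convex_Icc a b).starConvex hx)
      hy hxy hf (by simpa using hf')).trans_eq ?_
    rw [sq_abs]
    norm_num
  rw [tau0_eq_weighted_intervalAverage_taylor_remainder hαβ.ne' hax.ne hxb.ne (hfint ha) (hfint hb),
    abs_div, abs_of_pos hαβ]
  calc _ ≤ (α * (K * (a - x) ^ 2 / 6) + β * (K * (b - x) ^ 2 / 6)) / (α + β) := by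
        gcongr
        refine (abs_add_le _ _).trans ?_
        rw [abs_mul, abs_mul, abs_of_nonneg hα, abs_of_nonneg hβ]
        gcongr
        exacts [hrem ha hax.ne', hrem hb hxb.ne]
    _ = (α * (x - a) ^ 2 + β * (b - x) ^ 2) * K / (6 * (α + β)) := by
        field_simp
        ring

theorem stmt_4 (a b α β x : ℝ) (f f' f'' : ℝ → ℝ)
    (hab : a < b)
    (hα : 0 ≤ α) (hβ : 0 ≤ β) (hαβ : 0 < α + β)
    (hax : a < x) (hxb : x < b)
    (hfd : ∀ t ∈ Set.Icc a b, HasDerivAt f (f' t) t)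
    (hf''int : IntervalIntegrable f'' MeasureTheory.volume a b)
    (hac : ∀ t ∈ Set.Icc a b, f' t = f' a + ∫ u in a..t, f'' u)
    (K : ℝ) (hK : ∀ᵐ t ∂MeasureTheory.volume.restrict (Set.Icc a b), |f'' t| ≤ K)
    :
    |tau0 a b α β f f' x| ≤
      (α * (x - a) ^ 2 + β * (b - x) ^ 2) * K / (6 * (α + β)) := by
  rw [← uIcc_of_le hab.le] at hK
  refine stmt_4_general hα hβ hαβ hax hxb (fun t ht ↦ (hfd t ht).hasDerivWithinAt) fun t ht ↦ ?_
  rw [hac t ht, hac x ⟨hax.le, hxb.le⟩, add_sub_add_left_eq_sub]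
  exact norm_integral_sub_integral_le_of_norm_le_const_ae hf''int hK
    (Icc_subset_uIcc ⟨hax.le, hxb.le⟩) (Icc_subset_uIcc ht)
end

section
/- If f″ ∈ L_1[a,b], then |τ₀(x;α,β)| ≤ (α(x−a) + β(b−x) + |α(x−a) − β(b−x)|)·‖f″‖_1/(4(α+β)), where ‖f″‖_1 = ∫_a^b |f″(t)| dt. -/
open MeasureTheory intervalIntegral

/-!
A bound `C` for `|f' t - f' x|` between `x` and `y` controls the first order Taylor remainder of `f`
at `x` by `C * |t - x|`, so averaging over `[x, y]` gives
`|intMean f x y - (f x + (y - x) / 2 * f' x)| ≤ C * |y - x| / 2`. Up to the factor `1 / (α + β)`,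
`tau0` is the combination with weights `α` and `β` of these errors for `y = a` and `y = b`. The
variations of `f'` on `[a, x]` and `[x, b]` serve as the two constants `C`; they add up to the total
variation, so both may be given the larger of the weights `α * (x - a)` and `β * (b - x)`. Absolute
continuity of `f'` enters only to bound its total variation by the integral of `|f''|`.
-/

section Variation

open Set

theorem eVariationOn_le_of_edist_le {ι E F : Type*} [LinearOrder ι] [PseudoEMetricSpace E]
    [PseudoEMetricSpace F] {f : ι → E} {g : ι → F} {s : Set ι}
    (h : ∀ x ∈ s, ∀ y ∈ s, edist (f x) (f y) ≤ edist (g x) (g y)) :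
    eVariationOn f s ≤ eVariationOn g s :=
  iSup_le fun p ↦ (Finset.sum_le_sum fun i _ ↦ h _ (p.2.2.2 (i + 1)) _ (p.2.2.2 i)).trans
    (eVariationOn.sum_le p.2.2.1 p.2.2.2)

theorem toReal_eVariationOn_Icc_add_Icc {ι E : Type*} [LinearOrder ι] [PseudoEMetricSpace E]
    {f : ι → E} {a b c : ι} (hf : BoundedVariationOn f (Icc a c)) (hab : a ≤ b) (hbc : b ≤ c) :
    (eVariationOn f (Icc a b)).toReal + (eVariationOn f (Icc b c)).toReal =
      (eVariationOn f (Icc a c)).toReal := by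
  rw [← ENNReal.toReal_add (hf.mono (Icc_subset_Icc_right hbc))
    (hf.mono (Icc_subset_Icc_left hab))]
  simpa only [univ_inter] using
    congrArg ENNReal.toReal (eVariationOn.Icc_add_Icc f hab hbc (mem_univ b))

variable {E : Type*} [NormedAddCommGroup E] [NormedSpace ℝ E] {μ : Measure ℝ} {F g : ℝ → E}
  {a b : ℝ}

theorem eVariationOn_le_integral_norm (hab : a ≤ b) (hg : IntervalIntegrable g μ a b)
    (hF : ∀ t ∈ Icc a b, F t = F a + ∫ u in a..t, g u ∂μ) :
    eVariationOn F (Icc a b) ≤ ENNReal.ofReal (∫ u in a..b, ‖g u‖ ∂μ) := by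
  let V : ℝ → ℝ := fun t ↦ ∫ u in a..t, ‖g u‖ ∂μ
  have hg_sub : ∀ t ∈ Icc a b, IntervalIntegrable g μ a t := fun t ht ↦
    hg.mono_set (uIcc_subset_uIcc_left (Icc_subset_uIcc ht))
  have norm_sub_le : ∀ s ∈ Icc a b, ∀ t ∈ Icc a b, s ≤ t → ‖F t - F s‖ ≤ V t - V s := by
    intro s hs t ht hst
    rw [hF t ht, hF s hs, add_sub_add_left_eq_sub,
      integral_interval_sub_left (hg_sub t ht) (hg_sub s hs),
      integral_interval_sub_left (hg_sub t ht).norm (hg_sub s hs).norm]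
    exact norm_integral_le_integral_norm hst
  have V_mono : MonotoneOn V (Icc a b) := fun s hs t ht hst ↦
    sub_nonneg.1 ((norm_nonneg _).trans (norm_sub_le s hs t ht hst))
  have dist_le : ∀ s ∈ Icc a b, ∀ t ∈ Icc a b, dist (F s) (F t) ≤ dist (V s) (V t) := by
    intro s hs t ht
    wlog hst : s ≤ t generalizing s t
    · simpa only [dist_comm] using this t ht s hs (le_of_not_ge hst)
    rw [dist_eq_norm', Real.dist_eq, abs_sub_comm]
    exact (norm_sub_le s hs t ht hst).trans (le_abs_self _)
  calc
    eVariationOn F (Icc a b) ≤ eVariationOn V (Icc a b) :=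
      eVariationOn_le_of_edist_le fun s hs t ht ↦ by
        simpa only [edist_dist] using ENNReal.ofReal_le_ofReal (dist_le s hs t ht)
    _ = ENNReal.ofReal (V b - V a) := by
      simpa only [inter_self] using
        V_mono.eVariationOn_eq (left_mem_Icc.2 hab) (right_mem_Icc.2 hab)
    _ = ENNReal.ofReal (∫ u in a..b, ‖g u‖ ∂μ) := by simp only [V, integral_same, sub_zero]

theorem boundedVariationOn_Icc_of_eq_add_integral (hab : a ≤ b) (hg : IntervalIntegrable g μ a b)
    (hF : ∀ t ∈ Icc a b, F t = F a + ∫ u in a..t, g u ∂μ) : BoundedVariationOn F (Icc a b) :=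
  ne_top_of_le_ne_top ENNReal.ofReal_ne_top (eVariationOn_le_integral_norm hab hg hF)

theorem toReal_eVariationOn_le_integral_norm (hab : a ≤ b) (hg : IntervalIntegrable g μ a b)
    (hF : ∀ t ∈ Icc a b, F t = F a + ∫ u in a..t, g u ∂μ) :
    (eVariationOn F (Icc a b)).toReal ≤ ∫ u in a..b, ‖g u‖ ∂μ :=
  ENNReal.toReal_le_of_le_ofReal
    (intervalIntegral.integral_nonneg hab fun u _ ↦ norm_nonneg (g u))
    (eVariationOn_le_integral_norm hab hg hF)

end Variation

section IntegralMean

open Set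
open scoped Interval

theorem integral_taylor_one {E : Type*} [NormedAddCommGroup E] [NormedSpace ℝ E]
    [CompleteSpace E] (x y : ℝ) (v w : E) :
    ∫ t in x..y, (v + (t - x) • w) = (y - x) • v + ((y - x) ^ 2 / 2) • w := by
  rw [integral_add intervalIntegrable_const (Continuous.intervalIntegrable (by fun_prop) x y),
    intervalIntegral.integral_const, intervalIntegral.integral_smul_const,
    integral_comp_sub_right (fun t ↦ t), integral_id]
  simp

theorem norm_integral_sub_taylor_one_le {E : Type*} [NormedAddCommGroup E] [NormedSpace ℝ E]
    [CompleteSpace E] {f f' : ℝ → E} {x y C : ℝ}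
    (hf : ∀ t ∈ [[x, y]], HasDerivWithinAt f (f' t) [[x, y]] t)
    (hC : ∀ t ∈ [[x, y]], ‖f' t - f' x‖ ≤ C) :
    ‖(∫ t in x..y, f t) - ((y - x) • f x + ((y - x) ^ 2 / 2) • f' x)‖ ≤ C * (y - x) ^ 2 / 2 := by
  have remainder_le : ∀ t ∈ [[x, y]], ‖f t - (f x + (t - x) • f' x)‖ ≤ C * |t - x| := by
    intro t ht
    have := (convex_uIcc x y).norm_image_sub_le_of_norm_hasDerivWithin_le
      (f := fun t ↦ f t - (t - x) • f' x)
      (fun t ht ↦ (hf t ht).sub (((hasDerivWithinAt_id t _).sub_const x).smul_const (f' x)))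
      (fun t ht ↦ by simpa only [one_smul] using hC t ht) left_mem_uIcc ht
    simpa [sub_sub, add_comm] using this
  have hf_int : IntervalIntegrable f volume x y :=
    ContinuousOn.intervalIntegrable fun t ht ↦ (hf t ht).continuousWithinAt
  rw [← integral_taylor_one,
    ← integral_sub hf_int (Continuous.intervalIntegrable (by fun_prop) x y)]
  calc
    _ ≤ ∫ t in Ι x y, C * |t - x| := by
      rw [norm_integral_eq_norm_integral_uIoc]
      refine MeasureTheory.norm_integral_le_of_norm_le
        (Continuous.intervalIntegrable (by fun_prop) x y).def' ?_
      exact ae_restrict_of_forall_mem measurableSet_uIoc fun t ht ↦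
        remainder_le t (uIoc_subset_uIcc ht)
    _ = C * (y - x) ^ 2 / 2 := by
      have integral_abs_sub : ∫ t in Ι x y, |t - x| = (y - x) ^ 2 / 2 := by
        simpa [one_add_one_eq_two] using integral_pow_abs_sub_uIoc (a := x) (b := y) (n := 1)
      rw [MeasureTheory.integral_const_mul, integral_abs_sub, mul_div_assoc]

theorem intMean_symm (f : ℝ → ℝ) (c d : ℝ) : intMean f c d = intMean f d c := by
  rw [intMean, intMean, integral_symm d c, ← neg_sub d c, one_div_neg_eq_neg_one_div,
    neg_mul, mul_neg]

theorem abs_intMean_sub_taylor_one_le {f f' : ℝ → ℝ} {x y C : ℝ} (hxy : x ≠ y)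
    (hf : ∀ t ∈ [[x, y]], HasDerivWithinAt f (f' t) [[x, y]] t)
    (hC : ∀ t ∈ [[x, y]], |f' t - f' x| ≤ C) :
    |intMean f x y - (f x + (y - x) / 2 * f' x)| ≤ C * |y - x| / 2 := by
  have hyx : y - x ≠ 0 := sub_ne_zero.2 hxy.symm
  have mean_error_eq : intMean f x y - (f x + (y - x) / 2 * f' x) =
      ((∫ t in x..y, f t) - ((y - x) • f x + ((y - x) ^ 2 / 2) • f' x)) / (y - x) := by
    simp only [intMean, smul_eq_mul]
    field_simp
  rw [mean_error_eq, abs_div, div_le_iff₀ (abs_pos.2 hyx)]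
  calc
    _ ≤ C * (y - x) ^ 2 / 2 := norm_integral_sub_taylor_one_le hf hC
    _ = C * |y - x| / 2 * |y - x| := by rw [← sq_abs]; ring

end IntegralMean

section Functional

open Set

theorem tau0_eq_weighted_intMean_errors (a b x : ℝ) {α β : ℝ} (f f' : ℝ → ℝ) (hαβ : α + β ≠ 0) :
    tau0 a b α β f f' x =
      (α * (intMean f x a - (f x + (a - x) / 2 * f' x)) +
        β * (intMean f x b - (f x + (b - x) / 2 * f' x))) / (α + β) := by
  rw [tau0, intMean_symm f a x]
  field_simp
  ring

theorem two_mul_weighted_sum_le {R : Type*} [CommRing R] [LinearOrder R] [IsStrictOrderedRing R]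
    (p q : R) {A B : R} (hA : 0 ≤ A) (hB : 0 ≤ B) :
    2 * (p * A + q * B) ≤ (p + q + |p - q|) * (A + B) := by
  have hpA := mul_le_mul_of_nonneg_right (le_abs_self (p - q)) hA
  have hqB := mul_le_mul_of_nonneg_right (neg_le_abs (p - q)) hB
  linarith

theorem abs_tau0_le_of_abs_deriv_sub_le {a b α β x A B : ℝ} {f f' : ℝ → ℝ} (hα : 0 ≤ α)
    (hβ : 0 ≤ β) (hαβ : 0 < α + β) (hax : a < x) (hxb : x < b)
    (hf : ∀ t ∈ Icc a b, HasDerivWithinAt f (f' t) (Icc a b) t)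
    (hA : ∀ t ∈ Icc a x, |f' t - f' x| ≤ A) (hB : ∀ t ∈ Icc x b, |f' t - f' x| ≤ B) :
    |tau0 a b α β f f' x| ≤ (α * (x - a) * A + β * (b - x) * B) / (2 * (α + β)) := by
  have hab : a ≤ b := (hax.trans hxb).le
  have left_sub : uIcc x a ⊆ Icc a b := uIcc_subset_Icc ⟨hax.le, hxb.le⟩ ⟨le_rfl, hab⟩
  have right_sub : uIcc x b ⊆ Icc a b := uIcc_subset_Icc ⟨hax.le, hxb.le⟩ ⟨hab, le_rfl⟩
  have error_left : |intMean f x a - (f x + (a - x) / 2 * f' x)| ≤ A * (x - a) / 2 := by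
    rw [← uIcc_of_ge hax.le] at hA
    simpa only [abs_sub_comm a x, abs_of_pos (sub_pos.2 hax)] using
      abs_intMean_sub_taylor_one_le hax.ne' (fun t ht ↦ (hf t (left_sub ht)).mono left_sub) hA
  have error_right : |intMean f x b - (f x + (b - x) / 2 * f' x)| ≤ B * (b - x) / 2 := by
    rw [← uIcc_of_le hxb.le] at hB
    simpa only [abs_of_pos (sub_pos.2 hxb)] using
      abs_intMean_sub_taylor_one_le hxb.ne (fun t ht ↦ (hf t (right_sub ht)).mono right_sub) hB
  rw [tau0_eq_weighted_intMean_errors a b x f f' hαβ.ne', abs_div, abs_of_pos hαβ]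
  calc
    _ ≤ (α * (A * (x - a) / 2) + β * (B * (b - x) / 2)) / (α + β) := by
      gcongr
      refine (abs_add_le _ _).trans ?_
      rw [abs_mul, abs_mul, abs_of_nonneg hα, abs_of_nonneg hβ]
      gcongr
    _ = (α * (x - a) * A + β * (b - x) * B) / (2 * (α + β)) := by
      field_simp

theorem stmt_6_general {a b α β x : ℝ} {f f' : ℝ → ℝ} (hα : 0 ≤ α) (hβ : 0 ≤ β)
    (hαβ : 0 < α + β) (hax : a < x) (hxb : x < b)
    (hf : ∀ t ∈ Icc a b, HasDerivWithinAt f (f' t) (Icc a b) t)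
    (hf' : BoundedVariationOn f' (Icc a b)) :
    |tau0 a b α β f f' x| ≤
      (α * (x - a) + β * (b - x) + |α * (x - a) - β * (b - x)|) *
        (eVariationOn f' (Icc a b)).toReal / (4 * (α + β)) := by
  set A := (eVariationOn f' (Icc a x)).toReal
  set B := (eVariationOn f' (Icc x b)).toReal
  have hA : ∀ t ∈ Icc a x, |f' t - f' x| ≤ A := fun t ht ↦
    (hf'.mono (Icc_subset_Icc_right hxb.le)).dist_le ht (right_mem_Icc.2 hax.le)
  have hB : ∀ t ∈ Icc x b, |f' t - f' x| ≤ B := fun t ht ↦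
    (hf'.mono (Icc_subset_Icc_left hax.le)).dist_le ht (left_mem_Icc.2 hxb.le)
  calc
    _ ≤ (α * (x - a) * A + β * (b - x) * B) / (2 * (α + β)) :=
      abs_tau0_le_of_abs_deriv_sub_le hα hβ hαβ hax hxb hf hA hB
    _ = 2 * (α * (x - a) * A + β * (b - x) * B) / (4 * (α + β)) := by
      field_simp
      norm_num
    _ ≤ (α * (x - a) + β * (b - x) + |α * (x - a) - β * (b - x)|) * (A + B) / (4 * (α + β)) := by
      refine div_le_div_of_nonneg_right ?_ (by positivity)
      exact two_mul_weighted_sum_le _ _ ENNReal.toReal_nonneg ENNReal.toReal_nonneg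
    _ = _ := by rw [toReal_eVariationOn_Icc_add_Icc hf' hax.le hxb.le]

end Functional

theorem stmt_6 (a b α β x : ℝ) (f f' f'' : ℝ → ℝ)
    (hab : a < b)
    (hα : 0 ≤ α) (hβ : 0 ≤ β) (hαβ : 0 < α + β)
    (hax : a < x) (hxb : x < b)
    (hfd : ∀ t ∈ Set.Icc a b, HasDerivAt f (f' t) t)
    (hf''int : IntervalIntegrable f'' MeasureTheory.volume a b)
    (hac : ∀ t ∈ Set.Icc a b, f' t = f' a + ∫ u in a..t, f'' u)
    :
    |tau0 a b α β f f' x| ≤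
      (α * (x - a) + β * (b - x) + |α * (x - a) - β * (b - x)|) *
        (∫ t in a..b, |f'' t|) / (4 * (α + β)) := by
  refine (stmt_6_general hα hβ hαβ hax hxb (fun t ht ↦ (hfd t ht).hasDerivWithinAt)
    (boundedVariationOn_Icc_of_eq_add_integral hab.le hf''int hac)).trans ?_
  gcongr
  exact toReal_eVariationOn_le_integral_norm hab.le hf''int hac
end

section
/- If f″ is essentially bounded on [a,b], then | (1/2)·f((a+b)/2) + (1/4)·(f(a)+f(b)) − ((b−a)/32)·(f′(b)−f′(a)) − (1/(b−a))·∫_a^b f(t) dt | ≤ (b−a)²·‖f″‖_∞/96, where ‖f″‖_∞ denotes the essential supremum of |f″| on [a,b]. -/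
open MeasureTheory intervalIntegral

/-! Expand an antiderivative `F` of `f` to second order about both ends of a panel `[x, y]` and
compare the expansions at the midpoint `m`. The first-order terms give the trapezoidal rule, the
second-order terms give the correction `-(y - x) ^ 2 / 8 * (f' y - f' x)`, and if `f'` is
`K`-Lipschitz each remainder is at most `K / 6 * |m - x| ^ 3`, which makes `K * |y - x| ^ 3 / 24` in
all. The theorem is the sum of two such panels, of length `(b - a) / 2`: the values of `f'` at the
common endpoint cancel, and `2 * K * ((b - a) / 2) ^ 3 / 24 = (b - a) * ((b - a) ^ 2 * K / 96)`. -/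

section TaylorBounds

variable {E G : Type*} [NormedAddCommGroup E] [NormedSpace ℝ E]
  [NormedAddCommGroup G] [NormedSpace ℝ G]

theorem norm_image_sub_le_of_norm_hasFDerivWithinAt_le_mul_pow {f : E → G} {f' : E → E →L[ℝ] G}
    {s : Set E} {x y : E} {C : ℝ} {n : ℕ} (hs : StarConvex ℝ x s)
    (hf : ∀ u ∈ s, HasFDerivWithinAt f (f' u) s u) (bound : ∀ u ∈ s, ‖f' u‖ ≤ C * ‖u - x‖ ^ n)
    (hy : y ∈ s) : ‖f y - f x‖ ≤ C * (‖y - x‖ ^ (n + 1) / (n + 1)) := by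
  let γ : ℝ → E := fun t ↦ x + t • (y - x)
  have hγs : Set.MapsTo γ (Set.Icc 0 1) s := fun t ht ↦ hs.add_smul_sub_mem hy ht.1 ht.2
  have hγ (t : ℝ) : HasDerivAt γ (y - x) t :=
    (((hasDerivAt_id t).smul_const (y - x)).const_add x).congr_deriv (one_smul ℝ _)
  have hfγ : ∀ t ∈ Set.Icc (0 : ℝ) 1,
      HasDerivWithinAt (fun t ↦ f (γ t) - f x) (f' (γ t) (y - x)) (Set.Icc 0 1) t := fun t ht ↦
    ((hf _ (hγs ht)).comp_hasDerivWithinAt t (hγ t).hasDerivWithinAt hγs).sub_const _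
  have hB (t : ℝ) : HasDerivAt (fun t ↦ C * ‖y - x‖ ^ (n + 1) * (t ^ (n + 1) / (n + 1)))
      (C * ‖y - x‖ ^ (n + 1) * t ^ n) t := by
    refine (((hasDerivAt_pow (n + 1) t).div_const (n + 1 : ℝ)).const_mul _).congr_deriv ?_
    push_cast
    field_simp
  have hbound : ∀ t ∈ Set.Ico (0 : ℝ) 1,
      ‖f' (γ t) (y - x)‖ ≤ C * ‖y - x‖ ^ (n + 1) * t ^ n := fun t ht ↦ calc
    ‖f' (γ t) (y - x)‖ ≤ C * ‖γ t - x‖ ^ n * ‖y - x‖ :=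
      (f' (γ t)).le_of_opNorm_le (bound _ (hγs (Set.Ico_subset_Icc_self ht))) _
    _ = C * ‖y - x‖ ^ (n + 1) * t ^ n := by
      rw [add_sub_cancel_left, norm_smul, Real.norm_of_nonneg ht.1]
      ring
  have h := image_norm_le_of_norm_deriv_right_le_deriv_boundary
    (fun t ht ↦ (hfγ t ht).continuousWithinAt)
    (fun t ht ↦ (hfγ t (Set.Ico_subset_Icc_self ht)).mono_of_mem_nhdsWithin
      (Icc_mem_nhdsGE_of_mem ht))
    (by simp [γ]) hB hbound (Set.right_mem_Icc.2 zero_le_one)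
  simpa [γ, div_eq_mul_inv, mul_assoc] using h

variable {s : Set ℝ} {x y C K : ℝ} {n : ℕ}

theorem norm_image_sub_le_of_norm_hasDerivWithinAt_le_mul_pow {f f' : ℝ → E}
    (hs : StarConvex ℝ x s) (hf : ∀ u ∈ s, HasDerivWithinAt f (f' u) s u)
    (bound : ∀ u ∈ s, ‖f' u‖ ≤ C * |u - x| ^ n) (hy : y ∈ s) :
    ‖f y - f x‖ ≤ C * (|y - x| ^ (n + 1) / (n + 1)) :=
  norm_image_sub_le_of_norm_hasFDerivWithinAt_le_mul_pow hs
    (fun u hu ↦ (hf u hu).hasFDerivWithinAt) (fun u hu ↦ by simpa using bound u hu) hy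

theorem norm_sub_taylor_one_le_of_lipschitz_deriv {f f' : ℝ → E} (hs : StarConvex ℝ x s)
    (hf : ∀ u ∈ s, HasDerivWithinAt f (f' u) s u)
    (hf' : ∀ u ∈ s, ‖f' u - f' x‖ ≤ K * |u - x|) (hy : y ∈ s) :
    ‖f y - f x - (y - x) • f' x‖ ≤ K / 2 * |y - x| ^ 2 := by
  have hderiv : ∀ u ∈ s, HasDerivWithinAt (fun u ↦ f u - u • f' x) (f' u - f' x) s u :=
    fun u hu ↦ ((hf u hu).sub ((hasDerivWithinAt_id u s).smul_const (f' x))).congr_deriv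
      (by rw [one_smul])
  have h := norm_image_sub_le_of_norm_hasDerivWithinAt_le_mul_pow (n := 1) hs hderiv
    (by simpa only [pow_one] using hf') hy
  convert h using 1
  · congr 1; module
  · push_cast; ring

theorem norm_sub_taylor_two_le_of_lipschitz_deriv {F f f' : ℝ → E} (hs : StarConvex ℝ x s)
    (hF : ∀ u ∈ s, HasDerivWithinAt F (f u) s u) (hf : ∀ u ∈ s, HasDerivWithinAt f (f' u) s u)
    (hf' : ∀ u ∈ s, ‖f' u - f' x‖ ≤ K * |u - x|) (hy : y ∈ s) :
    ‖F y - F x - (y - x) • f x - ((y - x) ^ 2 / 2) • f' x‖ ≤ K / 6 * |y - x| ^ 3 := by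
  have hderiv : ∀ u ∈ s, HasDerivWithinAt
      (fun u ↦ F u - u • f x - ((u - x) ^ 2 / 2) • f' x) (f u - f x - (u - x) • f' x) s u := by
    intro u hu
    have hlin := (hasDerivWithinAt_id u s).smul_const (f x)
    have hquad := ((((hasDerivWithinAt_id u s).sub_const x).pow 2).div_const 2).smul_const (f' x)
    exact ((hF u hu).sub hlin |>.sub hquad).congr_deriv (by simp)
  have h := norm_image_sub_le_of_norm_hasDerivWithinAt_le_mul_pow (n := 2) hs hderiv
    (fun u hu ↦ norm_sub_taylor_one_le_of_lipschitz_deriv hs hf hf' hu) hy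
  convert h using 1
  · congr 1; module
  · push_cast; ring

end TaylorBounds

section Quadrature

variable {E : Type*} [NormedAddCommGroup E] [NormedSpace ℝ E] {a b x y K : ℝ}

theorem norm_corrected_trapezoid_sub_le {F f f' : ℝ → E} {s : Set ℝ} (hs : Convex ℝ s)
    (hF : ∀ u ∈ s, HasDerivWithinAt F (f u) s u) (hf : ∀ u ∈ s, HasDerivWithinAt f (f' u) s u)
    (hf' : ∀ u ∈ s, ∀ v ∈ s, ‖f' v - f' u‖ ≤ K * |v - u|) (hx : x ∈ s) (hy : y ∈ s) :
    ‖((y - x) / 2) • (f x + f y) - ((y - x) ^ 2 / 8) • (f' y - f' x) - (F y - F x)‖ ≤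
      K * |y - x| ^ 3 / 24 := by
  let m := (x + y) / 2
  let R (z : ℝ) : E := F m - F z - (m - z) • f z - ((m - z) ^ 2 / 2) • f' z
  have hm : m ∈ s := by
    simpa only [midpoint_eq_smul_add, invOf_eq_inv, smul_eq_mul, m, div_eq_inv_mul] using
      hs.midpoint_mem hx hy
  have hR : ∀ z ∈ s, ‖R z‖ ≤ K / 6 * |m - z| ^ 3 := fun z hz ↦
    norm_sub_taylor_two_le_of_lipschitz_deriv (hs.starConvex hz) hF hf (hf' z hz) hm
  have hmx : |m - x| = |y - x| / 2 := by
    rw [show m - x = (y - x) / 2 by simp only [m]; ring, abs_div, abs_two]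
  have hmy : |m - y| = |y - x| / 2 := by
    rw [show m - y = -((y - x) / 2) by simp only [m]; ring, abs_neg, abs_div, abs_two]
  calc _ = ‖R y - R x‖ := by
        simp only [R, m]
        congr 1; module
    _ ≤ K / 6 * |m - y| ^ 3 + K / 6 * |m - x| ^ 3 :=
        norm_sub_le_of_le (hR y hy) (hR x hx)
    _ = K * |y - x| ^ 3 / 24 := by rw [hmx, hmy]; ring

theorem hasDerivWithinAt_integral_Icc_of_continuousOn [CompleteSpace E] {f : ℝ → E}
    (hf : ContinuousOn f (Set.Icc a b)) (hx : x ∈ Set.Icc a b) :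
    HasDerivWithinAt (fun u ↦ ∫ t in a..u, f t) (f x) (Set.Icc a b) x := by
  have : Fact (x ∈ Set.Icc a b) := ⟨hx⟩
  have hint : IntervalIntegrable f volume a x :=
    (hf.mono (Set.Icc_subset_Icc_right hx.2)).intervalIntegrable_of_Icc hx.1
  exact integral_hasDerivWithinAt_right hint
    (hf.stronglyMeasurableAtFilter_nhdsWithin measurableSet_Icc x) (hf x hx)

theorem norm_sub_le_mul_of_eq_add_integral {g g' : ℝ → E}
    (hg' : IntervalIntegrable g' volume a b)
    (hg : ∀ t ∈ Set.Icc a b, g t = g a + ∫ u in a..t, g' u)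
    (bound : ∀ᵐ t ∂volume.restrict (Set.Icc a b), ‖g' t‖ ≤ K)
    (hx : x ∈ Set.Icc a b) (hy : y ∈ Set.Icc a b) : ‖g y - g x‖ ≤ K * |y - x| := by
  have hint : ∀ t ∈ Set.Icc a b, IntervalIntegrable g' volume a t := fun t ht ↦
    hg'.mono_set (Set.uIcc_subset_uIcc_left (Set.Icc_subset_uIcc ht))
  have hsub : Set.uIoc x y ⊆ Set.Icc a b :=
    Set.uIoc_subset_uIcc.trans (Set.ordConnected_Icc.uIcc_subset hx hy)
  rw [hg y hy, hg x hx, add_sub_add_left_eq_sub,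
    integral_interval_sub_left (hint y hy) (hint x hx)]
  refine norm_integral_le_of_norm_le_const_ae ?_
  filter_upwards [(ae_restrict_iff' measurableSet_Icc).1 bound] with t ht htxy
  exact ht (hsub htxy)

theorem stmt_11_general [CompleteSpace E] {f f' : ℝ → E} (hab : a < b)
    (hf : ∀ t ∈ Set.Icc a b, HasDerivWithinAt f (f' t) (Set.Icc a b) t)
    (hf' : ∀ x ∈ Set.Icc a b, ∀ y ∈ Set.Icc a b, ‖f' y - f' x‖ ≤ K * |y - x|) :
    ‖(1 / 2 : ℝ) • f ((a + b) / 2) + (1 / 4 : ℝ) • (f a + f b)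
        - ((b - a) / 32) • (f' b - f' a) - (1 / (b - a)) • ∫ t in a..b, f t‖ ≤
      (b - a) ^ 2 * K / 96 := by
  let F (u : ℝ) : E := ∫ t in a..u, f t
  let m := (a + b) / 2
  let Q (x y : ℝ) : E :=
    ((y - x) / 2) • (f x + f y) - ((y - x) ^ 2 / 8) • (f' y - f' x) - (F y - F x)
  have hF : ∀ t ∈ Set.Icc a b, HasDerivWithinAt F (f t) (Set.Icc a b) t := fun t ht ↦
    hasDerivWithinAt_integral_Icc_of_continuousOn (fun u hu ↦ (hf u hu).continuousWithinAt) ht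
  have hQ : ∀ x ∈ Set.Icc a b, ∀ y ∈ Set.Icc a b, ‖Q x y‖ ≤ K * |y - x| ^ 3 / 24 :=
    fun x hx y hy ↦ norm_corrected_trapezoid_sub_le (convex_Icc a b) hF hf hf' hx hy
  have hm : m ∈ Set.Icc a b := ⟨by simp only [m]; linarith, by simp only [m]; linarith⟩
  have hpos : 0 < b - a := sub_pos.2 hab
  have ham : |m - a| = (b - a) / 2 := by
    rw [show m - a = (b - a) / 2 by simp only [m]; ring, abs_of_pos (half_pos hpos)]
  have hmb : |b - m| = (b - a) / 2 := by
    rw [show b - m = (b - a) / 2 by simp only [m]; ring, abs_of_pos (half_pos hpos)]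
  calc _ = ‖(1 / (b - a)) • (Q a m + Q m b)‖ := by
        have hFa : F a = 0 := integral_same
        simp only [Q, hFa, m]
        congr 1
        match_scalars <;> field_simp <;> ring
    _ ≤ 1 / (b - a) * (K * |m - a| ^ 3 / 24 + K * |b - m| ^ 3 / 24) := by
        rw [norm_smul, Real.norm_of_nonneg (one_div_pos.2 hpos).le]
        gcongr
        exact norm_add_le_of_le (hQ a (Set.left_mem_Icc.2 hab.le) m hm)
          (hQ m hm b (Set.right_mem_Icc.2 hab.le))
    _ = (b - a) ^ 2 * K / 96 := by
        rw [ham, hmb]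
        field_simp
        ring

end Quadrature

theorem stmt_11 (a b : ℝ) (f f' f'' : ℝ → ℝ)
    (hab : a < b)
    (hfd : ∀ t ∈ Set.Icc a b, HasDerivAt f (f' t) t)
    (hf''int : IntervalIntegrable f'' MeasureTheory.volume a b)
    (hac : ∀ t ∈ Set.Icc a b, f' t = f' a + ∫ u in a..t, f'' u)
    (K : ℝ) (hK : ∀ᵐ t ∂MeasureTheory.volume.restrict (Set.Icc a b), |f'' t| ≤ K)
    :
    |(1 / 2) * f ((a + b) / 2) + (1 / 4) * (f a + f b)
        - ((b - a) / 32) * (f' b - f' a) - (1 / (b - a)) * ∫ t in a..b, f t| ≤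
      (b - a) ^ 2 * K / 96 :=
  stmt_11_general hab (fun t ht ↦ (hfd t ht).hasDerivWithinAt)
    fun _ hx _ hy ↦ norm_sub_le_mul_of_eq_add_integral hf''int hac hK hx hy
end

section
/- If f″ is essentially bounded on [a,b], then for every h ∈ [0,1], | (h−1)·f((a+b)/2) − (h/2)·(f(a)+f(b)) + (h²(b−a)/8)·(f′(b)−f′(a)) + (1/(b−a))·∫_a^b f(t) dt | ≤ ((1−h)³ + h³)·(b−a)²·‖f″‖_∞/24, where ‖f″‖_∞ denotes the essential supremum of |f″| on [a,b]. -/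
open MeasureTheory intervalIntegral

/-!
Let `F` be a primitive of `f`, and let `P c x` be the value at `c` of the quadratic Taylor
polynomial of `F` based at `x`. Differentiating in the base point leaves only the top order term:
formally, `∂P/∂x = ((c - x) ^ 2 / 2) • f'' x`, so in norm the increment of `P c` over an interval
is at most `∫ K * (c - t) ^ 2 / 2`. As `f'` is merely `K`-Lipschitz, this is obtained by bounding
the right slopes of `P c` instead of its derivative. Up to the factor `b - a`, the
quadrature error is the increment of `P (a + h * (b - a) / 2)` over the left half of `[a, b]` plus
that of `P (b - h * (b - a) / 2)` over the right half.
-/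

section

open Set Filter
open scoped Topology NNReal

variable {E : Type*} [NormedAddCommGroup E] {a b c x : ℝ} {K : ℝ≥0}

theorem norm_sub_le_sub_of_eventually_norm_sub_le {φ : ℝ → E} {B B' : ℝ → ℝ} (hab : a ≤ b)
    (hφ : ContinuousOn φ (Icc a b)) (hB : ∀ x, HasDerivAt B (B' x) x)
    (bound : ∀ x ∈ Ico a b, ∀ r, B' x < r → ∀ᶠ z in 𝓝[>] x, ‖φ z - φ x‖ ≤ r * ‖z - x‖) :
    ‖φ b - φ a‖ ≤ B b - B a := by
  refine image_le_of_liminf_slope_right_le_deriv_boundary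
    (f := fun z ↦ ‖φ z - φ a‖) (B := fun z ↦ B z - B a) (B' := B')
    (hφ.sub continuousOn_const).norm (by simp)
    (fun x _ ↦ ((hB x).sub_const _).continuousAt.continuousWithinAt)
    (fun x _ ↦ ((hB x).sub_const _).hasDerivWithinAt) (fun x hx r hr ↦ ?_) (right_mem_Icc.2 hab)
  obtain ⟨r', hr', hr'r⟩ := exists_between hr
  refine Eventually.frequently ?_
  filter_upwards [bound x hx r' hr', self_mem_nhdsWithin] with z hz hxz
  have hpos : 0 < z - x := sub_pos.2 hxz
  have htri : ‖φ z - φ a‖ - ‖φ x - φ a‖ ≤ ‖φ z - φ x‖ := by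
    simpa using norm_sub_norm_le (φ z - φ a) (φ x - φ a)
  rw [Real.norm_of_nonneg hpos.le] at hz
  rw [slope_def_field, div_lt_iff₀ hpos]
  exact (htri.trans hz).trans_lt (mul_lt_mul_of_pos_right hr'r hpos)

theorem nonneg_of_ae_norm_le_Icc {φ : ℝ → E} {C : ℝ} (hab : a < b)
    (hC : ∀ᵐ t ∂volume.restrict (Icc a b), ‖φ t‖ ≤ C) : 0 ≤ C := by
  have : (ae (volume.restrict (Icc a b))).NeBot := by
    rw [ae_neBot, Ne, Measure.restrict_eq_zero, Real.volume_Icc]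
    simpa using hab
  obtain ⟨t, ht⟩ := hC.exists
  exact (norm_nonneg _).trans ht

variable [NormedSpace ℝ E] {F f f' : ℝ → E} {s : Set ℝ}

/-- The quadratic Taylor polynomial of `F` based at `x`, evaluated at `c`, where `f` and `f'` stand
for the first two derivatives of `F`. The base point comes last, since it is the one that varies. -/
noncomputable def taylorQuadratic (F f f' : ℝ → E) (c x : ℝ) : E :=
  F x + (c - x) • f x + ((c - x) ^ 2 / 2) • f' x

-- `f'` need not be differentiable at `x`, so the top coefficient is frozen at its value there.
theorem hasDerivWithinAt_taylorQuadratic_const (hF : HasDerivWithinAt F (f x) s x)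
    (hf : HasDerivWithinAt f (f' x) s x) :
    HasDerivWithinAt (taylorQuadratic F f (fun _ ↦ f' x) c) 0 s x := by
  have hlin : HasDerivWithinAt (fun z ↦ c - z) (-1) s x := (hasDerivWithinAt_id x s).const_sub c
  convert! (hF.add (hlin.smul hf)).add (((hlin.pow 2).div_const 2).smul_const (f' x)) using 1
  module

theorem eventually_norm_taylorQuadratic_sub_le (hx : x ∈ s) (hF : HasDerivWithinAt F (f x) s x)
    (hf : HasDerivWithinAt f (f' x) s x) (hf' : LipschitzOnWith K f' s) {r : ℝ}
    (hr : K * (c - x) ^ 2 / 2 < r) :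
    ∀ᶠ z in 𝓝[s] x,
      ‖taylorQuadratic F f f' c z - taylorQuadratic F f f' c x‖ ≤ r * ‖z - x‖ := by
  obtain ⟨r', hr', hr'r⟩ := exists_between hr
  have hcoeff : ∀ᶠ z in 𝓝[s] x, K * (c - z) ^ 2 / 2 < r' :=
    nhdsWithin_le_nhds <| (show Continuous fun z ↦ K * (c - z) ^ 2 / 2 by fun_prop).continuousAt
      |>.eventually_lt continuousAt_const hr'
  have hfrozen := (hasDerivWithinAt_taylorQuadratic_const (c := c) hF hf).isLittleO.def
    (sub_pos.2 hr'r)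
  filter_upwards [hcoeff, hfrozen, self_mem_nhdsWithin] with z hz hRz hzs
  simp only [smul_zero, sub_zero] at hRz
  set R := taylorQuadratic F f (fun _ ↦ f' x) c with hR
  have hsplit : taylorQuadratic F f f' c z - taylorQuadratic F f f' c x =
      ((c - z) ^ 2 / 2) • (f' z - f' x) + (R z - R x) := by
    simp only [hR, taylorQuadratic]
    module
  calc ‖taylorQuadratic F f f' c z - taylorQuadratic F f f' c x‖
      ≤ ‖((c - z) ^ 2 / 2) • (f' z - f' x)‖ + ‖R z - R x‖ := hsplit ▸ norm_add_le _ _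
    _ ≤ (c - z) ^ 2 / 2 * (K * ‖z - x‖) + (r - r') * ‖z - x‖ := by
        rw [norm_smul, Real.norm_of_nonneg (by positivity)]
        gcongr
        exact hf'.norm_sub_le hzs hx
    _ = (K * (c - z) ^ 2 / 2 + (r - r')) * ‖z - x‖ := by ring
    _ ≤ r * ‖z - x‖ := by gcongr; linarith

theorem norm_taylorQuadratic_sub_le (hab : a ≤ b)
    (hF : ∀ t ∈ Icc a b, HasDerivWithinAt F (f t) (Icc a b) t)
    (hf : ∀ t ∈ Icc a b, HasDerivWithinAt f (f' t) (Icc a b) t)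
    (hf' : LipschitzOnWith K f' (Icc a b)) (c : ℝ) :
    ‖taylorQuadratic F f f' c b - taylorQuadratic F f f' c a‖ ≤
      K * ((b - c) ^ 3 - (a - c) ^ 3) / 6 := by
  have hcont : ContinuousOn (taylorQuadratic F f f' c) (Icc a b) := by
    have hFc : ContinuousOn F (Icc a b) := fun t ht ↦ (hF t ht).continuousWithinAt
    have hfc : ContinuousOn f (Icc a b) := fun t ht ↦ (hf t ht).continuousWithinAt
    have hf'c := hf'.continuousOn
    unfold taylorQuadratic
    fun_prop
  have hB : ∀ x, HasDerivAt (fun x ↦ K * (x - c) ^ 3 / 6) (K * (c - x) ^ 2 / 2) x := fun x ↦ by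
    convert! ((((hasDerivAt_id x).sub_const c).pow 3).const_mul (K : ℝ)).div_const 6 using 1
    simp only [id_eq]
    ring
  refine (norm_sub_le_sub_of_eventually_norm_sub_le hab hcont hB fun x hx r hr ↦ ?_).trans_eq
    (by ring)
  have hx' := Ico_subset_Icc_self hx
  exact nhdsWithin_le_of_mem (Icc_mem_nhdsGT_of_mem hx)
    (eventually_norm_taylorQuadratic_sub_le hx' (hF x hx') (hf x hx') hf' hr)

theorem norm_primitive_sub_quadrature_le (hab : a ≤ b)
    (hF : ∀ t ∈ Icc a b, HasDerivWithinAt F (f t) (Icc a b) t)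
    (hf : ∀ t ∈ Icc a b, HasDerivWithinAt f (f' t) (Icc a b) t)
    (hf' : LipschitzOnWith K f' (Icc a b)) (h : ℝ) :
    ‖F b - F a - (b - a) • ((1 - h) • f ((a + b) / 2) + (h / 2) • (f a + f b)
        - (h ^ 2 * (b - a) / 8) • (f' b - f' a))‖ ≤
      ((1 - h) ^ 3 + h ^ 3) * (b - a) ^ 3 * K / 24 := by
  set m := (a + b) / 2 with hm
  have hleft : Icc a m ⊆ Icc a b := Icc_subset_Icc_right (by linarith)
  have hright : Icc m b ⊆ Icc a b := Icc_subset_Icc_left (by linarith)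
  set P := taylorQuadratic F f f' with hP
  set c₁ := a + h * (b - a) / 2 with hc₁
  set c₂ := b - h * (b - a) / 2 with hc₂
  have hbound₁ : ‖P c₁ m - P c₁ a‖ ≤ K * ((m - c₁) ^ 3 - (a - c₁) ^ 3) / 6 :=
    norm_taylorQuadratic_sub_le (by linarith) (fun t ht ↦ (hF t (hleft ht)).mono hleft)
      (fun t ht ↦ (hf t (hleft ht)).mono hleft) (hf'.mono hleft) c₁
  have hbound₂ : ‖P c₂ b - P c₂ m‖ ≤ K * ((b - c₂) ^ 3 - (m - c₂) ^ 3) / 6 :=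
    norm_taylorQuadratic_sub_le (by linarith) (fun t ht ↦ (hF t (hright ht)).mono hright)
      (fun t ht ↦ (hf t (hright ht)).mono hright) (hf'.mono hright) c₂
  have hsplit : F b - F a - (b - a) • ((1 - h) • f m + (h / 2) • (f a + f b)
      - (h ^ 2 * (b - a) / 8) • (f' b - f' a)) = (P c₁ m - P c₁ a) + (P c₂ b - P c₂ m) := by
    simp only [hP, taylorQuadratic]
    generalize f m = fm, f' m = fm'
    simp only [hc₁, hc₂, hm]
    module
  rw [hsplit]
  refine (norm_add_le_of_le hbound₁ hbound₂).trans_eq ?_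
  simp only [hc₁, hc₂, hm]
  ring

theorem hasDerivWithinAt_integral_of_continuousOn_Icc [CompleteSpace E] {t : ℝ}
    (hf : ContinuousOn f (Icc a b)) (ht : t ∈ Icc a b) :
    HasDerivWithinAt (fun u ↦ ∫ v in a..u, f v) (f t) (Icc a b) t := by
  have : Fact (t ∈ Icc a b) := ⟨ht⟩
  exact integral_hasDerivWithinAt_right
    ((hf.mono (Icc_subset_Icc_right ht.2)).intervalIntegrable_of_Icc ht.1)
    (hf.stronglyMeasurableAtFilter_nhdsWithin measurableSet_Icc t) (hf t ht)

theorem lipschitzOnWith_of_eq_add_integral {g φ : ℝ → E} (hφ : IntervalIntegrable φ volume a b)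
    (hg : ∀ t ∈ Icc a b, g t = g a + ∫ u in a..t, φ u)
    (hK : ∀ᵐ t ∂volume.restrict (Icc a b), ‖φ t‖ ≤ K) : LipschitzOnWith K g (Icc a b) := by
  refine LipschitzOnWith.of_dist_le_mul fun x hx y hy ↦ ?_
  have hint {t : ℝ} (ht : t ∈ Icc a b) : IntervalIntegrable φ volume a t :=
    hφ.mono_set (uIcc_subset_uIcc_left (Icc_subset_uIcc ht))
  have hbound : ∀ᵐ t, t ∈ uIoc y x → ‖φ t‖ ≤ K := by
    filter_upwards [(ae_restrict_iff' measurableSet_Icc).1 hK] with t ht hyx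
    exact ht (ordConnected_Icc.uIcc_subset hy hx (uIoc_subset_uIcc hyx))
  rw [hg x hx, hg y hy, dist_add_left, dist_eq_norm, integral_interval_sub_left (hint hx) (hint hy)]
  exact norm_integral_le_of_norm_le_const_ae hbound

theorem stmt_13_general [CompleteSpace E] (hab : a < b)
    (hf : ∀ t ∈ Icc a b, HasDerivWithinAt f (f' t) (Icc a b) t)
    (hf' : LipschitzOnWith K f' (Icc a b)) (h : ℝ) :
    ‖(h - 1) • f ((a + b) / 2) - (h / 2) • (f a + f b)
        + (h ^ 2 * (b - a) / 8) • (f' b - f' a) + (1 / (b - a)) • ∫ t in a..b, f t‖ ≤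
      ((1 - h) ^ 3 + h ^ 3) * (b - a) ^ 2 * K / 24 := by
  have hba : 0 < b - a := sub_pos.2 hab
  have hfc : ContinuousOn f (Icc a b) := fun t ht ↦ (hf t ht).continuousWithinAt
  have hquad := norm_primitive_sub_quadrature_le hab.le
    (fun _ ↦ hasDerivWithinAt_integral_of_continuousOn_Icc hfc) hf hf' h
  rw [integral_same, sub_zero] at hquad
  set I := ∫ t in a..b, f t
  refine le_of_mul_le_mul_left ?_ hba
  calc (b - a) * ‖(h - 1) • f ((a + b) / 2) - (h / 2) • (f a + f b)
          + (h ^ 2 * (b - a) / 8) • (f' b - f' a) + (1 / (b - a)) • I‖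
      = ‖I - (b - a) • ((1 - h) • f ((a + b) / 2) + (h / 2) • (f a + f b)
          - (h ^ 2 * (b - a) / 8) • (f' b - f' a))‖ := by
        rw [← norm_smul_of_nonneg hba.le, smul_add, one_div, smul_inv_smul₀ hba.ne']
        congr 1
        module
    _ ≤ ((1 - h) ^ 3 + h ^ 3) * (b - a) ^ 3 * K / 24 := hquad
    _ = (b - a) * (((1 - h) ^ 3 + h ^ 3) * (b - a) ^ 2 * K / 24) := by ring

end

theorem stmt_13 (a b : ℝ) (f f' f'' : ℝ → ℝ)
    (hab : a < b)
    (hfd : ∀ t ∈ Set.Icc a b, HasDerivAt f (f' t) t)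
    (hf''int : IntervalIntegrable f'' MeasureTheory.volume a b)
    (hac : ∀ t ∈ Set.Icc a b, f' t = f' a + ∫ u in a..t, f'' u)
    (K : ℝ) (hK : ∀ᵐ t ∂MeasureTheory.volume.restrict (Set.Icc a b), |f'' t| ≤ K)
    :
    ∀ h ∈ Set.Icc (0 : ℝ) 1,
      |(h - 1) * f ((a + b) / 2) - (h / 2) * (f a + f b)
          + (h ^ 2 * (b - a) / 8) * (f' b - f' a) + (1 / (b - a)) * ∫ t in a..b, f t| ≤
        ((1 - h) ^ 3 + h ^ 3) * (b - a) ^ 2 * K / 24 := by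
  lift K to NNReal using nonneg_of_ae_norm_le_Icc (φ := f'') hab hK
  exact fun h _ ↦ stmt_13_general hab (fun t ht ↦ (hfd t ht).hasDerivWithinAt)
    (lipschitzOnWith_of_eq_add_integral hf''int hac hK) h
end

section
/- If f″ ∈ L_1[a,b], then for every h ∈ [0,1], | (h−1)·f((a+b)/2) − (h/2)·(f(a)+f(b)) + (h²(b−a)/8)·(f′(b)−f′(a)) + (1/(b−a))·∫_a^b f(t) dt | ≤ ((b−a)/8)·max{(1−h)², h²}·‖f″‖_1, where ‖f″‖_1 = ∫_a^b |f″(t)| dt. -/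
open MeasureTheory intervalIntegral

/-!
Let `m` be the midpoint of `[a, b]`, `p = a + h (b - a) / 2` and `q = b - h (b - a) / 2`.
Integrate `(t - p)² f''` over `[a, m]` and `(t - q)² f''` over `[m, b]` by parts twice and add: the
terms in `f'(m)` cancel because `m - p = q - m`, and what remains is `2 (b - a)` times the
quadrature error. So the error is `∫ K f''`, where `K` is a square divided by `2 (b - a)`. The
number being squared runs from `-h (b - a) / 2` at the endpoints to `(1 - h) (b - a) / 2` at the
midpoint, so convexity of the square bounds `K` by `(b - a) / 8 * max ((1 - h)²) (h²)`.
-/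

section AbsoluteContinuity

variable {E : Type*} [NormedAddCommGroup E] [NormedSpace ℝ E] {a b c : ℝ}

theorem absolutelyContinuousOnInterval_integral {g : ℝ → E}
    (hg : IntervalIntegrable g volume a b) (hc : c ∈ Set.uIcc a b) :
    AbsolutelyContinuousOnInterval (fun x ↦ ∫ t in c..x, g t) a b := by
  have hg_sub {x y : ℝ} (hx : x ∈ Set.uIcc a b) (hy : y ∈ Set.uIcc a b) :
      IntervalIntegrable g volume x y := hg.mono_set (Set.uIcc_subset_uIcc hx hy)
  have dist_le {x y : ℝ} (hx : x ∈ Set.uIcc a b) (hy : y ∈ Set.uIcc a b) :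
      dist (∫ t in c..x, g t) (∫ t in c..y, g t) ≤
        dist (∫ t in c..x, ‖g t‖) (∫ t in c..y, ‖g t‖) := by
    rw [dist_eq_norm, dist_eq_norm, integral_interval_sub_left (hg_sub hc hx) (hg_sub hc hy),
      integral_interval_sub_left (hg_sub hc hx).norm (hg_sub hc hy).norm]
    exact norm_integral_le_abs_integral_norm
  have hnorm := hg.norm.absolutelyContinuousOnInterval_intervalIntegral hc
  refine squeeze_zero' (.of_forall fun _ ↦ Finset.sum_nonneg fun _ _ ↦ dist_nonneg) ?_ hnorm
  filter_upwards [Filter.mem_inf_of_right (Filter.mem_principal_self _)] with I hI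
  exact Finset.sum_le_sum fun i hi ↦ dist_le (hI.1 i hi).1 (hI.1 i hi).2

theorem integral_eq_sub_of_absolutelyContinuousOnInterval [CompleteSpace E] {F g : ℝ → E}
    (hF : AbsolutelyContinuousOnInterval F a b)
    (hderiv : ∀ᵐ x, x ∈ Set.uIcc a b → HasDerivAt F (g x) x)
    (hg : IntervalIntegrable g volume a b) :
    ∫ t in a..b, g t = F b - F a := by
  have hdiff : AbsolutelyContinuousOnInterval (F - fun x ↦ ∫ t in a..x, g t) a b :=
    hF.sub (absolutelyContinuousOnInterval_integral hg Set.left_mem_uIcc)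
  have hdiff_deriv : ∀ᵐ x, x ∈ Set.uIcc a b → HasDerivAt (F - fun x ↦ ∫ t in a..x, g t) 0 x := by
    filter_upwards [hderiv, hg.ae_hasDerivAt_integral] with x hFx hgx hx
    simpa only [sub_self] using (hFx hx).sub (hgx hx a Set.left_mem_uIcc)
  obtain ⟨C, hC⟩ := hdiff.const_of_ae_hasDerivAt_zero hdiff_deriv
  have hCa : F a = C := by simpa using hC a Set.left_mem_uIcc
  have hCb : F b - ∫ t in a..b, g t = C := hC b Set.right_mem_uIcc
  rw [hCa, ← hCb, sub_sub_cancel]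

end AbsoluteContinuity

/-- `F` is an indefinite Lebesgue (Bochner) integral of `g` on the interval with endpoints `a` and
`b`. This encodes that `F` is absolutely continuous with derivative `g` almost everywhere. -/
structure IsLebesguePrimitive {E : Type*} [NormedAddCommGroup E] [NormedSpace ℝ E]
    (F g : ℝ → E) (a b : ℝ) : Prop where
  intervalIntegrable : IntervalIntegrable g volume a b
  eq_add_integral : ∀ t ∈ Set.uIcc a b, F t = F a + ∫ s in a..t, g s

namespace IsLebesguePrimitive

variable {E : Type*} [NormedAddCommGroup E] [NormedSpace ℝ E] {F g : ℝ → E} {a b c d : ℝ}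

theorem of_hasDerivWithinAt [CompleteSpace E]
    (hderiv : ∀ t ∈ Set.uIcc a b, HasDerivWithinAt F (g t) (Set.uIcc a b) t)
    (hg : IntervalIntegrable g volume a b) : IsLebesguePrimitive F g a b where
  intervalIntegrable := hg
  eq_add_integral t ht := by
    have hsub : Set.uIcc a t ⊆ Set.uIcc a b := Set.uIcc_subset_uIcc_left ht
    have hcont : ContinuousOn F (Set.uIcc a b) := fun x hx ↦ (hderiv x hx).continuousWithinAt
    have hderiv_Ioo : ∀ x ∈ Set.Ioo (min a t) (max a t), HasDerivWithinAt F (g x) (Set.Ioi x) x :=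
      fun x hx ↦ ((hderiv x (hsub (Set.Ioo_subset_Icc_self hx))).hasDerivAt
        (Filter.mem_of_superset (Icc_mem_nhds hx.1 hx.2) hsub)).hasDerivWithinAt
    rw [integral_eq_sub_of_hasDeriv_right (hcont.mono hsub) hderiv_Ioo (hg.mono_set hsub),
      add_sub_cancel]

theorem mono (hF : IsLebesguePrimitive F g a b) (hc : c ∈ Set.uIcc a b) (hd : d ∈ Set.uIcc a b) :
    IsLebesguePrimitive F g c d where
  intervalIntegrable := hF.intervalIntegrable.mono_set (Set.uIcc_subset_uIcc hc hd)
  eq_add_integral t ht := by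
    have ht_ab := Set.uIcc_subset_uIcc hc hd ht
    have hg_sub {x : ℝ} (hx : x ∈ Set.uIcc a b) : IntervalIntegrable g volume a x :=
      hF.intervalIntegrable.mono_set (Set.uIcc_subset_uIcc_left hx)
    rw [hF.eq_add_integral t ht_ab, hF.eq_add_integral c hc, add_assoc,
      integral_add_adjacent_intervals (hg_sub hc) ((hg_sub hc).symm.trans (hg_sub ht_ab))]

theorem continuousOn (hF : IsLebesguePrimitive F g a b) : ContinuousOn F (Set.uIcc a b) :=
  ((absolutelyContinuousOnInterval_integral hF.intervalIntegrable
    Set.left_mem_uIcc).continuousOn.const_add (F a)).congr hF.eq_add_integral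

theorem integral_smul_eq_sub [CompleteSpace E] (hF : IsLebesguePrimitive F g a b) {u : ℝ → ℝ}
    (hu : AbsolutelyContinuousOnInterval u a b) :
    ∫ t in a..b, u t • g t = u b • F b - u a • F a - ∫ t in a..b, deriv u t • F t := by
  set G : ℝ → E := fun x ↦ F a + ∫ t in a..x, g t
  have hGF {x : ℝ} (hx : x ∈ Set.uIcc a b) : G x = F x := (hF.eq_add_integral x hx).symm
  have hconst : AbsolutelyContinuousOnInterval (fun _ ↦ F a) a b :=
    contDiffOn_const.absolutelyContinuousOnInterval
  have huG : AbsolutelyContinuousOnInterval (u • G) a b :=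
    hu.smul (hconst.add (absolutelyContinuousOnInterval_integral hF.intervalIntegrable
      Set.left_mem_uIcc))
  have huG_deriv : ∀ᵐ x, x ∈ Set.uIcc a b →
      HasDerivAt (u • G) (u x • g x + deriv u x • F x) x := by
    filter_upwards [hu.ae_differentiableAt, hF.intervalIntegrable.ae_hasDerivAt_integral]
      with x hux hgx hx
    rw [← hGF hx]
    exact (hux hx).hasDerivAt.smul ((hgx hx a Set.left_mem_uIcc).const_add (F a))
  have hug := hF.intervalIntegrable.continuousOn_smul hu.continuousOn
  have huF := hu.intervalIntegrable_deriv.smul_continuousOn hF.continuousOn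
  have hsum := integral_eq_sub_of_absolutelyContinuousOnInterval huG huG_deriv (hug.add huF)
  rw [intervalIntegral.integral_add hug huF] at hsum
  rw [eq_sub_iff_add_eq, hsum, Pi.smul_apply', Pi.smul_apply', hGF Set.left_mem_uIcc,
    hGF Set.right_mem_uIcc]

theorem integral_sub_sq_smul [CompleteSpace E] {f f' f'' : ℝ → E}
    (hf : IsLebesguePrimitive f f' a b) (hf' : IsLebesguePrimitive f' f'' a b) (p : ℝ) :
    ∫ t in a..b, (t - p) ^ 2 • f'' t =
      (b - p) ^ 2 • f' b - (a - p) ^ 2 • f' a - (2 * (b - p)) • f b + (2 * (a - p)) • f a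
        + (2 : ℝ) • ∫ t in a..b, f t := by
  have hsq (t : ℝ) : deriv (fun t ↦ (t - p) ^ 2) t = 2 * (t - p) := by simp
  have hlin (t : ℝ) : deriv (fun t ↦ 2 * (t - p)) t = 2 := by simp
  have hsq_ac : AbsolutelyContinuousOnInterval (fun t ↦ (t - p) ^ 2) a b :=
    ContDiffOn.absolutelyContinuousOnInterval (by fun_prop)
  have hlin_ac : AbsolutelyContinuousOnInterval (fun t ↦ 2 * (t - p)) a b :=
    ContDiffOn.absolutelyContinuousOnInterval (by fun_prop)
  rw [hf'.integral_smul_eq_sub hsq_ac]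
  simp only [hsq]
  rw [hf.integral_smul_eq_sub hlin_ac]
  simp only [hlin, intervalIntegral.integral_smul]
  module

end IsLebesguePrimitive

/-- The error made when the mean of `f` over `[a, b]` is replaced by the combination of the
midpoint rule (weight `1 - h`) and the trapezoid rule (weight `h`), corrected by an endpoint
derivative term; `f'` stands for the derivative of `f`. -/
noncomputable def quadratureError {E : Type*} [NormedAddCommGroup E] [NormedSpace ℝ E]
    (f f' : ℝ → E) (a b h : ℝ) : E :=
  (h - 1) • f ((a + b) / 2) - (h / 2) • (f a + f b)
    + (h ^ 2 * (b - a) / 8) • (f' b - f' a) + (1 / (b - a)) • ∫ t in a..b, f t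

/-- The Peano kernel of `quadratureError`, i.e. the function to integrate against `f''`. Taking the
distance `min (t - a) (b - t)` to the nearer endpoint expresses both halves of the piecewise
quadratic kernel by one formula. -/
noncomputable def peanoKernel (a b h t : ℝ) : ℝ :=
  (min (t - a) (b - t) - h * (b - a) / 2) ^ 2 / (2 * (b - a))

section PeanoKernel

theorem continuous_peanoKernel (a b h : ℝ) : Continuous (peanoKernel a b h) := by
  unfold peanoKernel
  fun_prop

variable {a b t : ℝ} (h : ℝ)

theorem peanoKernel_of_le_midpoint (ht : t ≤ (a + b) / 2) :
    peanoKernel a b h t = 1 / (2 * (b - a)) * (t - (a + h * (b - a) / 2)) ^ 2 := by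
  rw [peanoKernel, min_eq_left (by linarith)]
  ring

theorem peanoKernel_of_midpoint_le (ht : (a + b) / 2 ≤ t) :
    peanoKernel a b h t = 1 / (2 * (b - a)) * (t - (b - h * (b - a) / 2)) ^ 2 := by
  rw [peanoKernel, min_eq_right (by linarith)]
  ring

theorem abs_peanoKernel_le (hab : a < b) (ht : t ∈ Set.Icc a b) :
    |peanoKernel a b h t| ≤ (b - a) / 8 * max ((1 - h) ^ 2) (h ^ 2) := by
  have hL : 0 < b - a := sub_pos.2 hab
  set s := min (t - a) (b - t) - h * (b - a) / 2 with hs_def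
  have hs : s ∈ Set.Icc (-(h * (b - a) / 2)) ((1 - h) * (b - a) / 2) := by
    have hmin_nonneg : 0 ≤ min (t - a) (b - t) :=
      le_min (sub_nonneg.2 ht.1) (sub_nonneg.2 ht.2)
    have hmin_left := min_le_left (t - a) (b - t)
    have hmin_right := min_le_right (t - a) (b - t)
    constructor <;> linarith
  have hs_sq : s ^ 2 ≤ (b - a) ^ 2 / 4 * max ((1 - h) ^ 2) (h ^ 2) := by
    calc s ^ 2 ≤ max ((-(h * (b - a) / 2)) ^ 2) (((1 - h) * (b - a) / 2) ^ 2) :=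
          (even_two.convexOn_pow (𝕜 := ℝ)).le_max_of_mem_Icc trivial trivial hs
      _ = (b - a) ^ 2 / 4 * max ((1 - h) ^ 2) (h ^ 2) := by
          rw [mul_max_of_nonneg _ _ (by positivity), max_comm]
          ring_nf
  calc |peanoKernel a b h t| = s ^ 2 / (2 * (b - a)) :=
        abs_of_nonneg (div_nonneg (sq_nonneg s) (by positivity))
    _ ≤ (b - a) ^ 2 / 4 * max ((1 - h) ^ 2) (h ^ 2) / (2 * (b - a)) := by gcongr
    _ = (b - a) / 8 * max ((1 - h) ^ 2) (h ^ 2) := by field_simp; ring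

variable {E : Type*} [NormedAddCommGroup E] [NormedSpace ℝ E]

theorem integral_peanoKernel_smul_left (hab : a ≤ b) (g : ℝ → E) :
    ∫ t in a..(a + b) / 2, peanoKernel a b h t • g t =
      (1 / (2 * (b - a))) • ∫ t in a..(a + b) / 2, (t - (a + h * (b - a) / 2)) ^ 2 • g t := by
  rw [← intervalIntegral.integral_smul]
  refine integral_congr fun t ht ↦ ?_
  rw [Set.uIcc_of_le (by linarith)] at ht
  simp only [peanoKernel_of_le_midpoint h ht.2, mul_smul]

theorem integral_peanoKernel_smul_right (hab : a ≤ b) (g : ℝ → E) :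
    ∫ t in (a + b) / 2..b, peanoKernel a b h t • g t =
      (1 / (2 * (b - a))) • ∫ t in (a + b) / 2..b, (t - (b - h * (b - a) / 2)) ^ 2 • g t := by
  rw [← intervalIntegral.integral_smul]
  refine integral_congr fun t ht ↦ ?_
  rw [Set.uIcc_of_le (by linarith)] at ht
  simp only [peanoKernel_of_midpoint_le h ht.1, mul_smul]

end PeanoKernel

section QuadratureError

variable {E : Type*} [NormedAddCommGroup E] [NormedSpace ℝ E] {a b : ℝ}

theorem norm_integral_smul_le_mul_integral_norm {μ : Measure ℝ} {u : ℝ → ℝ} {g : ℝ → E} {M : ℝ}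
    (hab : a ≤ b) (hu : ∀ t ∈ Set.Icc a b, |u t| ≤ M) (hg : IntervalIntegrable g μ a b) :
    ‖∫ t in a..b, u t • g t ∂μ‖ ≤ M * ∫ t in a..b, ‖g t‖ ∂μ := by
  rw [← intervalIntegral.integral_const_mul]
  refine intervalIntegral.norm_integral_le_of_norm_le hab (.of_forall fun t ht ↦ ?_)
    (hg.norm.const_mul M)
  rw [norm_smul, Real.norm_eq_abs]
  gcongr
  exact hu t (Set.Ioc_subset_Icc_self ht)

theorem quadratureError_eq_integral_peanoKernel_smul [CompleteSpace E] {f f' f'' : ℝ → E}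
    (hab : a < b) (hf : IsLebesguePrimitive f f' a b) (hf' : IsLebesguePrimitive f' f'' a b)
    (h : ℝ) : quadratureError f f' a b h = ∫ t in a..b, peanoKernel a b h t • f'' t := by
  have hm : (a + b) / 2 ∈ Set.uIcc a b := Set.mem_uIcc_of_le (by linarith) (by linarith)
  have hf_left := hf.mono Set.left_mem_uIcc hm
  have hf_right := hf.mono hm Set.right_mem_uIcc
  have hf'_left := hf'.mono Set.left_mem_uIcc hm
  have hf'_right := hf'.mono hm Set.right_mem_uIcc
  have hf_split := integral_add_adjacent_intervals (μ := volume)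
    hf_left.continuousOn.intervalIntegrable hf_right.continuousOn.intervalIntegrable
  have hK := continuous_peanoKernel a b h
  have hKf''_split := integral_add_adjacent_intervals
    (hf'_left.intervalIntegrable.continuousOn_smul hK.continuousOn)
    (hf'_right.intervalIntegrable.continuousOn_smul hK.continuousOn)
  rw [quadratureError, ← hf_split, ← hKf''_split, integral_peanoKernel_smul_left h hab.le,
    integral_peanoKernel_smul_right h hab.le, hf_left.integral_sub_sq_smul hf'_left,
    hf_right.integral_sub_sq_smul hf'_right]
  have hba : b - a ≠ 0 := sub_ne_zero.2 hab.ne'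
  match_scalars <;> field_simp <;> ring

theorem stmt_14_general [CompleteSpace E] {f f' f'' : ℝ → E} (hab : a < b)
    (hfd : ∀ t ∈ Set.Icc a b, HasDerivWithinAt f (f' t) (Set.Icc a b) t)
    (hf''int : IntervalIntegrable f'' volume a b)
    (hac : ∀ t ∈ Set.Icc a b, f' t = f' a + ∫ u in a..t, f'' u) (h : ℝ) :
    ‖(h - 1) • f ((a + b) / 2) - (h / 2) • (f a + f b)
        + (h ^ 2 * (b - a) / 8) • (f' b - f' a) + (1 / (b - a)) • ∫ t in a..b, f t‖ ≤
      ((b - a) / 8) * max ((1 - h) ^ 2) (h ^ 2) * ∫ t in a..b, ‖f'' t‖ := by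
  rw [← Set.uIcc_of_le hab.le] at hfd hac
  have hf' : IsLebesguePrimitive f' f'' a b := ⟨hf''int, hac⟩
  have hf : IsLebesguePrimitive f f' a b :=
    .of_hasDerivWithinAt hfd hf'.continuousOn.intervalIntegrable
  rw [← quadratureError, quadratureError_eq_integral_peanoKernel_smul hab hf hf' h]
  exact norm_integral_smul_le_mul_integral_norm hab.le (fun _ ↦ abs_peanoKernel_le h hab) hf''int

end QuadratureError

theorem stmt_14 (a b : ℝ) (f f' f'' : ℝ → ℝ)
    (hab : a < b)
    (hfd : ∀ t ∈ Set.Icc a b, HasDerivAt f (f' t) t)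
    (hf''int : IntervalIntegrable f'' MeasureTheory.volume a b)
    (hac : ∀ t ∈ Set.Icc a b, f' t = f' a + ∫ u in a..t, f'' u)
    :
    ∀ h ∈ Set.Icc (0 : ℝ) 1,
      |(h - 1) * f ((a + b) / 2) - (h / 2) * (f a + f b)
          + (h ^ 2 * (b - a) / 8) * (f' b - f' a) + (1 / (b - a)) * ∫ t in a..b, f t| ≤
        ((b - a) / 8) * max ((1 - h) ^ 2) (h ^ 2) * ∫ t in a..b, |f'' t| :=
  fun h _ ↦ stmt_14_general hab (fun t ht ↦ (hfd t ht).hasDerivWithinAt) hf''int hac h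
end
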